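/- arXiv:math/0503532 — 9 statements merged into one kernel-verified Lean document; each statement's English description precedes it below -/
import Mathlib

section
/- For every n ≥ 0 and every nonnegative measurable function φ : (X × X)^{n+1} → ℝ₊, the expectation of φ(X̄_0, …, X̄_n)·1(d_n = 0) under the law P_{ξ⊗ξ'⊗δ_0} of the coupled bell-variable chain equals the expectation under P*_{ξ⊗ξ'} of φ(X̄_0, …, X̄_n)·(1−ε)^{N_{n−1}}, where X̄_i = (X_i, X'_i), N_i := Σ_{j=0}^{i} 1_{C̄}(X̄_j) and N_{−1} := 0. -/
/-!
Both sides are computed by conditioning on the first step, by induction on `n` and for every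
deterministic starting point (`kexp_bell_eq`). Once the bell variable equals `1` it stays equal
to `1`, so a path whose bell variable has rung contributes nothing to `1(dₙ = 0)`
(`kexp_coupled_eq_zero`). Hence the first step of the bell chain from `(p, 0)` contributes
`(1 - ε) R̄(p, ·)` if `p ∈ C̄` and `P̄(p, ·)` otherwise, that is, `(1 - ε)^{1_{C̄}(p)} P*(p, ·)`;
the scalar is the factor of `(1 - ε)^{N_{n-1}}` coming from the starting point.
Joint measurability of `kexp` in the starting point and a parameter (`measurable_kexp`) justifies
the change of variables along the push-forwards that define the bell chain.
-/

open MeasureTheory ProbabilityTheory Set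
open scoped ENNReal

/-- Expectation `E_y[φ(X₀,…,Xₙ)]` for the Markov chain with kernel `κ` started at `y`. -/
noncomputable def kexp {Y : Type*} [MeasurableSpace Y] (κ : Kernel Y Y) :
    (n : ℕ) → Y → ((Fin (n + 1) → Y) → ℝ≥0∞) → ℝ≥0∞
  | 0, y, φ => φ (fun _ => y)
  | n + 1, y, φ => ∫⁻ y', kexp κ n y' (fun v => φ (Fin.cons y v)) ∂(κ y)

/-- Expectation `E_μ[φ(X₀,…,Xₙ)]` for the Markov chain with kernel `κ` and initial law `μ`. -/
noncomputable def chainExp {Y : Type*} [MeasurableSpace Y] (κ : Kernel Y Y) (μ : Measure Y)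
    (n : ℕ) (φ : (Fin (n + 1) → Y) → ℝ≥0∞) : ℝ≥0∞ :=
  ∫⁻ y, kexp κ n y φ ∂μ

theorem measurable_finCons {Y : Type*} [MeasurableSpace Y] (n : ℕ) :
    Measurable (fun q : Y × (Fin (n + 1) → Y) => (Fin.cons q.1 q.2 : Fin (n + 2) → Y)) := by
  refine measurable_pi_lambda _ fun i => ?_
  refine Fin.cases ?_ (fun j => ?_) i
  · simpa using measurable_fst
  · simpa using measurable_snd.eval

/-- The parameter space `Z` is what makes the induction work: after one step the starting point
becomes a parameter of the integrand. -/
theorem measurable_kexp.{u} {Y : Type u} [MeasurableSpace Y] (κ : Kernel Y Y) [IsMarkovKernel κ]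
    (n : ℕ) : ∀ {Z : Type u} [MeasurableSpace Z] (f : Z → (Fin (n + 1) → Y) → ℝ≥0∞),
      Measurable (Function.uncurry f) → Measurable (fun q : Z × Y => kexp κ n q.2 (f q.1)) := by
  induction n with
  | zero =>
    intro Z _ f hf
    exact hf.comp (measurable_fst.prodMk (measurable_pi_lambda _ fun _ => measurable_snd))
  | succ n ih =>
    intro Z _ f hf
    have hg : Measurable (Function.uncurry
        (fun (q : Z × Y) (v : Fin (n + 1) → Y) => f q.1 (Fin.cons q.2 v))) :=
      hf.comp ((measurable_fst.comp measurable_fst).prodMk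
        ((measurable_finCons n).comp ((measurable_snd.comp measurable_fst).prodMk measurable_snd)))
    have h := ih _ hg
    exact Measurable.lintegral_kernel_prod_right' (κ := κ.comap Prod.snd measurable_snd) h

theorem measurable_kexp_cons {Y : Type*} [MeasurableSpace Y] (κ : Kernel Y Y) [IsMarkovKernel κ]
    (n : ℕ) (y : Y) (ψ : (Fin (n + 2) → Y) → ℝ≥0∞) (hψ : Measurable ψ) :
    Measurable (fun y' => kexp κ n y' (fun v => ψ (Fin.cons y v))) := by
  have hf : Measurable (Function.uncurry
      (fun (y : Y) (v : Fin (n + 1) → Y) => ψ (Fin.cons y v))) :=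
    hψ.comp (measurable_finCons n)
  exact (measurable_kexp κ n _ hf).comp (measurable_const.prodMk measurable_id)

theorem kexp_const_mul {Y : Type*} [MeasurableSpace Y] (κ : Kernel Y Y) (c : ℝ≥0∞) (hc : c ≠ ∞)
    (n : ℕ) : ∀ (y : Y) (f : (Fin (n + 1) → Y) → ℝ≥0∞),
      kexp κ n y (fun v => c * f v) = c * kexp κ n y f := by
  induction n with
  | zero => intro y f; rfl
  | succ n ih =>
    intro y f
    simp only [kexp, ih]
    exact lintegral_const_mul' _ _ hc

/-- The state `d = 1` is absorbing: started there, the chain gives expectation zero to every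
function vanishing on paths that end with `d = 1`. -/
theorem kexp_coupled_eq_zero {X : Type*} [MeasurableSpace X] (P : Kernel X X)
    (Q : Kernel ((X × X) × Bool) ((X × X) × Bool)) [IsMarkovKernel Q]
    (hQ1 : ∀ x x' : X, Q ((x, x'), true) = (P x).map (fun y => ((y, y), true))) (n : ℕ) :
    ∀ (p : X × X) (ψ : (Fin (n + 1) → (X × X) × Bool) → ℝ≥0∞), Measurable ψ →
      (∀ w, (w (Fin.last n)).2 = true → ψ w = 0) → kexp Q n (p, true) ψ = 0 := by
  induction n with
  | zero => intro p ψ _ h0; exact h0 _ rfl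
  | succ n ih =>
    intro p ψ hψ h0
    have hm := measurable_kexp_cons Q n (p, true) ψ hψ
    simp only [kexp]
    rw [show p = (p.1, p.2) from rfl, hQ1, lintegral_map hm (by fun_prop)]
    refine (lintegral_congr fun y => ih _ _ ?_ ?_).trans lintegral_zero
    · exact hψ.comp ((measurable_finCons n).comp (measurable_const.prodMk measurable_id))
    · intro w hw
      apply h0
      rwa [← Fin.succ_last, Fin.cons_succ]

theorem measurable_bellIntegrand {X : Type*} [MeasurableSpace X] (n : ℕ)
    (φ : (Fin (n + 1) → X × X) → ℝ≥0∞) (hφ : Measurable φ) :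
    Measurable (fun w : Fin (n + 1) → (X × X) × Bool =>
      if (w (Fin.last n)).2 = false then φ (fun i => (w i).1) else 0) := by
  refine Measurable.ite ?_ (hφ.comp (by fun_prop)) measurable_const
  exact (measurable_snd.comp (measurable_pi_apply (Fin.last n))) (measurableSet_singleton false)

/-- The identity for a deterministic starting point `p`. -/
theorem kexp_bell_eq {X : Type*} [MeasurableSpace X] (P : Kernel X X)
    (Cbar : Set (X × X)) (ε : ℝ) (ν : X × X → Measure X)
    (Rbar Pbar Pstar : Kernel (X × X) (X × X))
    (hPstar1 : ∀ p ∈ Cbar, Pstar p = Rbar p) (hPstar2 : ∀ p ∉ Cbar, Pstar p = Pbar p)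
    (Q : Kernel ((X × X) × Bool) ((X × X) × Bool)) [IsMarkovKernel Q]
    (hQ1 : ∀ x x' : X, Q ((x, x'), true) = (P x).map (fun y => ((y, y), true)))
    (hQ2 : ∀ p ∈ Cbar, Q (p, false) =
      ENNReal.ofReal ε • (ν p).map (fun y => ((y, y), true)) +
        ENNReal.ofReal (1 - ε) • (Rbar p).map (fun z => (z, false)))
    (hQ3 : ∀ p ∉ Cbar, Q (p, false) = (Pbar p).map (fun z => (z, false))) (n : ℕ) :
    ∀ (p : X × X) (φ : (Fin (n + 1) → X × X) → ℝ≥0∞), Measurable φ →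
      kexp Q n (p, false)
          (fun w => if (w (Fin.last n)).2 = false then φ (fun i => (w i).1) else 0) =
        kexp Pstar n p (fun v => φ v * ENNReal.ofReal (1 - ε) ^
          (∑ i : Fin n, Set.indicator Cbar (fun _ => (1 : ℕ)) (v i.castSucc))) := by
  induction n with
  | zero => intro p φ _; simp [kexp]
  | succ n ih =>
    intro p φ hφ
    have hφp : Measurable (fun v : Fin (n + 1) → X × X => φ (Fin.cons p v)) :=
      hφ.comp ((measurable_finCons n).comp (measurable_const.prodMk measurable_id))
    have hcons : ∀ w : Fin (n + 1) → (X × X) × Bool,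
        (fun i => ((Fin.cons (p, false) w : Fin (n + 2) → (X × X) × Bool) i).1) =
          (Fin.cons p (fun i => (w i).1) : Fin (n + 2) → X × X) := by
      intro w
      funext i
      refine Fin.cases ?_ (fun j => ?_) i <;> simp
    have hm := measurable_kexp_cons Q n (p, false) _ (measurable_bellIntegrand (n + 1) φ hφ)
    simp only [← Fin.succ_last, Fin.cons_succ, hcons] at hm
    -- The factor contributed by the starting point is taken out of the right-hand side.
    have hR : ∀ z, kexp Pstar n z (fun v => φ (Fin.cons p v) * ENNReal.ofReal (1 - ε) ^
          (∑ i : Fin (n + 1), Set.indicator Cbar (fun _ => (1 : ℕ))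
            ((Fin.cons p v : Fin (n + 2) → X × X) i.castSucc))) =
        ENNReal.ofReal (1 - ε) ^ (Set.indicator Cbar (fun _ => (1 : ℕ)) p) *
          kexp Q n (z, false) (fun w => if (w (Fin.last n)).2 = false then
            φ (Fin.cons p (fun i => (w i).1)) else 0) := by
      intro z
      rw [ih z _ hφp, ← kexp_const_mul _ _ (ENNReal.pow_ne_top ENNReal.ofReal_ne_top)]
      congr 1
      funext v
      rw [Fin.sum_univ_succ, pow_add]
      simp only [Fin.castSucc_zero, Fin.cons_zero, ← Fin.succ_castSucc, Fin.cons_succ]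
      ring
    have hL : kexp Q (n + 1) (p, false)
          (fun w => if (w (Fin.last (n + 1))).2 = false then φ (fun i => (w i).1) else 0) =
        ∫⁻ y, kexp Q n y (fun w => if (w (Fin.last n)).2 = false then
          φ (Fin.cons p (fun i => (w i).1)) else 0) ∂(Q (p, false)) := by
      simp only [kexp, ← Fin.succ_last, Fin.cons_succ, hcons]
    rw [hL]
    simp only [kexp, hR]
    rw [lintegral_const_mul' _ _ (ENNReal.pow_ne_top ENNReal.ofReal_ne_top)]
    by_cases hp : p ∈ Cbar
    · rw [hQ2 p hp, hPstar1 p hp, lintegral_add_measure, lintegral_smul_measure,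
        lintegral_smul_measure, lintegral_map hm (by fun_prop), lintegral_map hm (by fun_prop)]
      have h0 : ∀ y : X, kexp Q n ((y, y), true) (fun w => if (w (Fin.last n)).2 = false then
          φ (Fin.cons p (fun i => (w i).1)) else 0) = 0 := fun y =>
        kexp_coupled_eq_zero P Q hQ1 n _ _ (measurable_bellIntegrand n _ hφp)
          (fun w hw => by simp [hw])
      simp [h0, hp]
    · rw [hQ3 p hp, hPstar2 p hp, lintegral_map hm (by fun_prop)]
      simp [hp]

/-- Lemma 1: for the coupled bell-variable chain,
`E_{ξ⊗ξ'⊗δ₀}[φ(X̄₀,…,X̄ₙ) 1(dₙ = 0)] = E*_{ξ⊗ξ'}[φ(X̄₀,…,X̄ₙ) (1-ε)^{N_{n-1}}]`. -/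
theorem bell_chain_residual_identity
    {X : Type*} [MeasurableSpace X] (P : Kernel X X) [IsMarkovKernel P]
    -- (A1)
    (Cbar : Set (X × X)) (hCbar : MeasurableSet Cbar)
    (ε : ℝ) (hε0 : 0 < ε) (hε1 : ε < 1)
    (ν : X × X → Measure X) (hν : ∀ p ∈ Cbar, IsProbabilityMeasure (ν p))
    (hminor : ∀ p ∈ Cbar, ∀ A : Set X, MeasurableSet A →
      ENNReal.ofReal ε * ν p A ≤ min (P p.1 A) (P p.2 A))
    -- the residual kernel R̄
    (Rbar : Kernel (X × X) (X × X)) [IsMarkovKernel Rbar]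
    (hRbar1 : ∀ p ∈ Cbar, ∀ A : Set X, MeasurableSet A →
      ENNReal.ofReal (1 - ε) * Rbar p (A ×ˢ Set.univ) + ENNReal.ofReal ε * ν p A = P p.1 A)
    (hRbar2 : ∀ p ∈ Cbar, ∀ A : Set X, MeasurableSet A →
      ENNReal.ofReal (1 - ε) * Rbar p (Set.univ ×ˢ A) + ENNReal.ofReal ε * ν p A = P p.2 A)
    -- the kernel P̄
    (Pbar : Kernel (X × X) (X × X)) [IsMarkovKernel Pbar]
    (hPbar1 : ∀ p ∈ Cbar, ∀ A A' : Set X, MeasurableSet A → MeasurableSet A' →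
      Pbar p (A ×ˢ A') = ENNReal.ofReal (1 - ε) * Rbar p (A ×ˢ A') +
        ENNReal.ofReal ε * ν p (A ∩ A'))
    (hPbar2 : ∀ p ∉ Cbar, ∀ A : Set X, MeasurableSet A →
      Pbar p (A ×ˢ Set.univ) = P p.1 A ∧ Pbar p (Set.univ ×ˢ A) = P p.2 A)
    -- the kernel P*
    (Pstar : Kernel (X × X) (X × X))
    (hPstar1 : ∀ p ∈ Cbar, Pstar p = Rbar p) (hPstar2 : ∀ p ∉ Cbar, Pstar p = Pbar p)
    -- the bell-variable chain: kernel Q on (X × X) × {0,1}, where `true` means coupled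
    (Q : Kernel ((X × X) × Bool) ((X × X) × Bool)) [IsMarkovKernel Q]
    (hQ1 : ∀ x x' : X, Q ((x, x'), true) = (P x).map (fun y => ((y, y), true)))
    (hQ2 : ∀ p ∈ Cbar, Q (p, false) =
      ENNReal.ofReal ε • (ν p).map (fun y => ((y, y), true)) +
        ENNReal.ofReal (1 - ε) • (Rbar p).map (fun z => (z, false)))
    (hQ3 : ∀ p ∉ Cbar, Q (p, false) = (Pbar p).map (fun z => (z, false)))
    (ξ ξ' : Measure X) [IsProbabilityMeasure ξ] [IsProbabilityMeasure ξ']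
    (n : ℕ) (φ : (Fin (n + 1) → X × X) → ℝ≥0∞) (hφ : Measurable φ) :
    chainExp Q ((ξ.prod ξ').map (fun p => (p, false))) n
        (fun w => if (w (Fin.last n)).2 = false then φ (fun i => (w i).1) else 0) =
      chainExp Pstar (ξ.prod ξ') n
        (fun v => φ v * ENNReal.ofReal (1 - ε) ^
          (∑ i : Fin n, Set.indicator Cbar (fun _ => (1 : ℕ)) (v i.castSucc))) := by
  have hm : Measurable (fun y => kexp Q n y
      (fun w => if (w (Fin.last n)).2 = false then φ (fun i => (w i).1) else 0)) :=
    (measurable_kexp Q n (Z := PUnit) (fun _ w =>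
        if (w (Fin.last n)).2 = false then φ (fun i => (w i).1) else 0)
      ((measurable_bellIntegrand n φ hφ).comp measurable_snd)).comp
      (measurable_const (a := PUnit.unit) |>.prodMk measurable_id)
  unfold chainExp
  rw [lintegral_map hm (by fun_prop)]
  exact lintegral_congr fun p =>
    kexp_bell_eq P Cbar ε ν Rbar Pbar Pstar hPstar1 hPstar2 Q hQ1 hQ2 hQ3 n p φ hφ
end

section
/- If ξ ⊗ ξ'(V̄) < ∞, then the process M_s := λ^{−s} B^{−N_{s−1}} (1−ε)^{N_{s−1}} V̄(X̄_s), s ≥ 0, is a supermartingale under P*_{ξ⊗ξ'} with respect to the natural filtration F_s = σ(X̄_0, …, X̄_s). -/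
/-!
Write `c_s = λ^{-s} B^{-N_{s-1}} (1-ε)^{N_{s-1}}`, so that `M_s = c_s V̄(X̄_s)` and `c_{s+1}` is
determined by `X̄_0, …, X̄_s`. The conditional mean of `M_{s+1}` is `c_{s+1} P*V̄(X̄_s)`. Off `C̄`,
`c_{s+1} = λ⁻¹ c_s` and `P*V̄ ≤ λ V̄`; on `C̄`, `c_{s+1} = λ⁻¹ B⁻¹ (1-ε) c_s` and
`P*V̄ = R̄V̄ ≤ sup_{C̄} R̄V̄ ≤ λ B / (1-ε)`, while `1 ≤ V̄`. In both cases the mean is at most `M_s`.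

This pointwise inequality is transferred to the path measure by `kexp_succ_le`, which integrates
out the last transition, and `supermartingale_of_step`, which compares integrals over events of
the form `{(X̄_0, …, X̄_s) ∈ A}`; these exhaust the natural filtration at time `s`. Working with
`ℝ≥0∞`-valued integrals gives integrability of `M_s` by induction from that of `M_0`.
-/

open MeasureTheory ProbabilityTheory Set
open scoped ENNReal

/-- The natural filtration of the coordinate process on path space `ℕ → Y`. -/
def coordFilt (Y : Type*) [MeasurableSpace Y] :
    Filtration ℕ (inferInstance : MeasurableSpace (ℕ → Y)) where
  seq s := ⨆ i ∈ Set.Iic s, MeasurableSpace.comap (fun ω : ℕ → Y => ω i) inferInstance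
  mono' := by
    intro i j hij
    exact iSup_le fun k => iSup_le fun hk =>
      le_iSup_of_le k (le_iSup_of_le (Set.mem_Iic.mpr ((Set.mem_Iic.mp hk).trans hij)) le_rfl)
  le' := by
    intro s
    exact iSup_le fun k => iSup_le fun _ => (measurable_pi_apply k).comap_le

/-- `N_{s-1}(ω) = ∑_{j=0}^{s-1} 1_{C̄}(X̄_j(ω))`. -/
noncomputable def Ncnt {Y : Type*} (Cbar : Set Y) (s : ℕ) (ω : ℕ → Y) : ℕ :=
  ∑ j ∈ Finset.range s, Set.indicator Cbar (fun _ => (1 : ℕ)) (ω j)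

/-- One-step conditioning on the last transition, in inequality form. No measurability is
needed, as only monotonicity of the Lebesgue integral is used. -/
lemma kexp_succ_le {Y : Type*} [MeasurableSpace Y] (κ : Kernel Y Y) (n : ℕ) :
    ∀ (y : Y) (φ : (Fin (n + 2) → Y) → ℝ≥0∞) (ψ : (Fin (n + 1) → Y) → ℝ≥0∞),
      (∀ v : Fin (n + 1) → Y,
        ∫⁻ y', φ (Fin.snoc (α := fun _ => Y) v y') ∂(κ (v (Fin.last n))) ≤ ψ v) →
      kexp κ (n + 1) y φ ≤ kexp κ n y ψ := by
  induction n with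
  | zero =>
    intro y φ ψ h
    have := h (fun _ => y)
    simp only [kexp]
    refine le_trans (lintegral_mono fun y' => le_of_eq ?_) this
    congr 1
    ext i
    fin_cases i <;> rfl
  | succ n ih =>
    intro y φ ψ h
    rw [kexp, kexp]
    refine lintegral_mono fun y' => ih y' _ _ fun v => ?_
    have := h (Fin.cons (α := fun _ => Y) y v)
    rw [← Fin.succ_last, Fin.cons_succ] at this
    refine le_trans (lintegral_mono fun y'' => le_of_eq ?_) this
    rw [Fin.cons_snoc_eq_snoc_cons]

/-- The restriction of a path to the times `0, …, s`. -/
def pathRestrict {Y : Type*} (s : ℕ) (ω : ℕ → Y) : Fin (s + 1) → Y := fun i => ω i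

/-- The extension of a finite path `(v 0, …, v s)` to an infinite one that stays at `v s`. -/
def pathExtend {Y : Type*} (s : ℕ) (v : Fin (s + 1) → Y) : ℕ → Y :=
  fun k => v ⟨min k s, by omega⟩

lemma measurable_pathExtend {Y : Type*} [MeasurableSpace Y] (s : ℕ) :
    Measurable (pathExtend (Y := Y) s) :=
  measurable_pi_lambda _ fun _ => measurable_pi_apply _

lemma coordFilt_le_comap {Y : Type*} [MeasurableSpace Y] (s : ℕ) :
    coordFilt Y s ≤ MeasurableSpace.comap (pathRestrict s) inferInstance := by
  refine iSup_le fun k => iSup_le fun hk => ?_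
  rintro _ ⟨A, hA, rfl⟩
  exact ⟨(fun v => v ⟨k, Nat.lt_succ_of_le hk⟩) ⁻¹' A, measurable_pi_apply _ hA, rfl⟩

lemma measurable_pathRestrict {Y : Type*} [MeasurableSpace Y] (s : ℕ) :
    Measurable[coordFilt Y s] (pathRestrict (Y := Y) s) := by
  refine @measurable_pi_lambda _ _ _ (coordFilt Y s) _ _ fun i => ?_
  refine Measurable.mono (comap_measurable (fun ω : ℕ → Y => ω i)) ?_ le_rfl
  exact le_iSup₂_of_le (f := fun i (_ : i ∈ Set.Iic s) =>
    MeasurableSpace.comap (fun ω : ℕ → Y => ω i) inferInstance) i.1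
    (Nat.lt_succ_iff.mp i.2) le_rfl

/-- A nonnegative functional `M s` of the chain up to time `s` whose one-step mean under `κ`,
given any past, does not exceed its current value is a supermartingale, provided that `M 0` is
integrable. The mean is taken by resampling coordinate `s + 1` of the path. -/
lemma supermartingale_of_step {Y : Type*} [MeasurableSpace Y] (κ : Kernel Y Y) (μ : Measure Y)
    (ℙc : Measure (ℕ → Y)) [IsProbabilityMeasure ℙc]
    (hℙc : ∀ (n : ℕ) (φ : (Fin (n + 1) → Y) → ℝ≥0∞), Measurable φ →
      ∫⁻ ω, φ (fun i => ω i) ∂ℙc = chainExp κ μ n φ)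
    (M : ℕ → (ℕ → Y) → ℝ) (hMm : ∀ s, Measurable (M s)) (hM0 : ∀ s ω, 0 ≤ M s ω)
    (hMloc : ∀ s ω ω', (∀ k ≤ s, ω k = ω' k) → M s ω = M s ω')
    (hstep : ∀ s ω, ∫⁻ y, ENNReal.ofReal (M (s + 1) (Function.update ω (s + 1) y)) ∂(κ (ω s))
      ≤ ENNReal.ofReal (M s ω))
    (hinit : ∫⁻ y, ENNReal.ofReal (M 0 (fun _ => y)) ∂μ ≠ ⊤) :
    Supermartingale M (coordFilt Y) ℙc := by
  have hext : ∀ s ω, M s (pathExtend s (pathRestrict s ω)) = M s ω := fun s ω =>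
    hMloc s _ _ fun k hk => by simp [pathExtend, pathRestrict, hk]
  have hset : ∀ s (A : Set (Fin (s + 1) → Y)), MeasurableSet A →
      ∫⁻ ω in pathRestrict s ⁻¹' A, ENNReal.ofReal (M (s + 1) ω) ∂ℙc ≤
        ∫⁻ ω in pathRestrict s ⁻¹' A, ENNReal.ofReal (M s ω) ∂ℙc := by
    intro s A hA
    have hr : Measurable (pathRestrict (Y := Y) s) :=
      (measurable_pathRestrict s).mono ((coordFilt Y).le s) le_rfl
    set ψ : (Fin (s + 1) → Y) → ℝ≥0∞ :=
      A.indicator fun v => ENNReal.ofReal (M s (pathExtend s v)) with hψ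
    set φ : (Fin (s + 2) → Y) → ℝ≥0∞ :=
      ((fun v => (Fin.init (α := fun _ => Y) v : Fin (s + 1) → Y)) ⁻¹' A).indicator
        fun v => ENNReal.ofReal (M (s + 1) (pathExtend (s + 1) v)) with hφ
    have hψm : Measurable ψ :=
      (((hMm s).comp (measurable_pathExtend s)).ennreal_ofReal).indicator hA
    have hinitm : Measurable
        (fun v : Fin (s + 2) → Y => (Fin.init (α := fun _ => Y) v : Fin (s + 1) → Y)) :=
      measurable_pi_lambda _ fun _ => measurable_pi_apply _
    have hφm : Measurable φ :=
      (((hMm (s + 1)).comp (measurable_pathExtend (s + 1))).ennreal_ofReal).indicator (hinitm hA)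
    have e1 : ∫⁻ ω in pathRestrict s ⁻¹' A, ENNReal.ofReal (M (s + 1) ω) ∂ℙc =
        chainExp κ μ (s + 1) φ := by
      rw [← hℙc _ φ hφm, ← lintegral_indicator (hr hA)]
      refine lintegral_congr fun ω => ?_
      have h := hext (s + 1) ω
      unfold pathRestrict at h
      simp only [hφ, Set.indicator, h]
      rfl
    have e2 : ∫⁻ ω in pathRestrict s ⁻¹' A, ENNReal.ofReal (M s ω) ∂ℙc = chainExp κ μ s ψ := by
      rw [← hℙc _ ψ hψm, ← lintegral_indicator (hr hA)]
      refine lintegral_congr fun ω => ?_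
      have h := hext s ω
      unfold pathRestrict at h
      simp only [hψ, Set.indicator, h]
      rfl
    rw [e1, e2]
    refine lintegral_mono fun y => kexp_succ_le κ s y φ ψ fun v => ?_
    by_cases hv : v ∈ A
    · have h1 := hstep s (pathExtend s v)
      have h2 : pathExtend s v s = v (Fin.last s) := by
        simp [pathExtend, Fin.last]
      rw [h2] at h1
      simp only [hψ, Set.indicator_of_mem hv]
      refine le_trans (lintegral_mono fun y' => ?_) h1
      refine (Set.indicator_le_self _ _ _).trans (le_of_eq ?_)
      congr 1
      refine hMloc _ _ _ fun k hk => ?_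
      rcases Nat.lt_or_ge k (s + 1) with hk' | hk'
      · have hks : k ≤ s := by omega
        simp [pathExtend, Fin.snoc, hk, hks, hk', hk'.ne]
      · obtain rfl : k = s + 1 := by omega
        simp [pathExtend, Fin.snoc]
    · have : ∀ y', φ (Fin.snoc (α := fun _ => Y) v y') = 0 := fun y' => by
        simp [hφ, hv]
      simp [this]
  have hfin : ∀ s, ∫⁻ ω, ENNReal.ofReal (M s ω) ∂ℙc ≠ ⊤ := by
    intro s
    induction s with
    | zero =>
      have h := hℙc 0 (fun v => ENNReal.ofReal (M 0 (pathExtend 0 v)))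
        ((hMm 0).comp (measurable_pathExtend 0)).ennreal_ofReal
      have h' : ∀ ω : ℕ → Y, M 0 (pathExtend 0 fun i => ω i) = M 0 ω := hext 0
      simp only [h'] at h
      rw [h]
      exact hinit
    | succ s ih =>
      refine ne_top_of_le_ne_top ih ?_
      simpa using hset s Set.univ MeasurableSet.univ
  have hint : ∀ s, Integrable (M s) ℙc := fun s => by
    refine ⟨(hMm s).aestronglyMeasurable, ?_⟩
    rw [hasFiniteIntegral_iff_ofReal (Filter.Eventually.of_forall (hM0 s))]
    exact (hfin s).lt_top
  refine supermartingale_of_setIntegral_succ_le ?_ hint ?_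
  · intro s
    have h : M s = fun ω => M s (pathExtend s (pathRestrict s ω)) :=
      funext fun ω => (hext s ω).symm
    rw [h]
    exact (((hMm s).comp (measurable_pathExtend s)).comp
      (measurable_pathRestrict s)).stronglyMeasurable
  · intro s A hA
    obtain ⟨A', hA', rfl⟩ := coordFilt_le_comap s A hA
    have hf : ∀ t, ∫ ω in pathRestrict s ⁻¹' A', M t ω ∂ℙc =
        (∫⁻ ω in pathRestrict s ⁻¹' A', ENNReal.ofReal (M t ω) ∂ℙc).toReal := fun t =>
      integral_eq_lintegral_of_nonneg_ae (Filter.Eventually.of_forall (hM0 t))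
        (hMm t).aestronglyMeasurable
    rw [hf, hf]
    exact ENNReal.toReal_mono
      (ne_top_of_le_ne_top (hfin s) (setLIntegral_le_lintegral _ _)) (hset s A' hA')

lemma measurable_Ncnt {Y : Type*} [MeasurableSpace Y] {C : Set Y} (hC : MeasurableSet C) (s : ℕ) :
    Measurable (Ncnt C s) := by
  unfold Ncnt
  exact Finset.measurable_fun_sum _ fun j _ =>
    (measurable_const.indicator hC).comp (measurable_pi_apply j)

lemma Ncnt_congr {Y : Type*} (C : Set Y) (s : ℕ) {ω ω' : ℕ → Y} (h : ∀ k < s, ω k = ω' k) :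
    Ncnt C s ω = Ncnt C s ω' :=
  Finset.sum_congr rfl fun j hj => by rw [h j (Finset.mem_range.mp hj)]

/-- If `ξ ⊗ ξ'(V̄) < ∞`, the process `M_s = λ^{-s} B^{-N_{s-1}} (1-ε)^{N_{s-1}} V̄(X̄_s)` is a
supermartingale under `P*_{ξ⊗ξ'}` with respect to the natural filtration, where
`B = max(1, (1-ε) λ⁻¹ sup_{C̄} R̄V̄)`. -/
theorem supermartingale_drift_process
    {X : Type*} [MeasurableSpace X] (P : Kernel X X) [IsMarkovKernel P]
    -- (A1)
    (Cbar : Set (X × X)) (hCbar : MeasurableSet Cbar)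
    (ε : ℝ) (hε0 : 0 < ε) (hε1 : ε < 1)
    (ν : X × X → Measure X) (hν : ∀ p ∈ Cbar, IsProbabilityMeasure (ν p))
    (hminor : ∀ p ∈ Cbar, ∀ A : Set X, MeasurableSet A →
      ENNReal.ofReal ε * ν p A ≤ min (P p.1 A) (P p.2 A))
    -- the residual kernel R̄
    (Rbar : Kernel (X × X) (X × X)) [IsMarkovKernel Rbar]
    (hRbar1 : ∀ p ∈ Cbar, ∀ A : Set X, MeasurableSet A →
      ENNReal.ofReal (1 - ε) * Rbar p (A ×ˢ Set.univ) + ENNReal.ofReal ε * ν p A = P p.1 A)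
    (hRbar2 : ∀ p ∈ Cbar, ∀ A : Set X, MeasurableSet A →
      ENNReal.ofReal (1 - ε) * Rbar p (Set.univ ×ˢ A) + ENNReal.ofReal ε * ν p A = P p.2 A)
    -- the kernel P̄
    (Pbar : Kernel (X × X) (X × X)) [IsMarkovKernel Pbar]
    (hPbar2 : ∀ p ∉ Cbar, ∀ A : Set X, MeasurableSet A →
      Pbar p (A ×ˢ Set.univ) = P p.1 A ∧ Pbar p (Set.univ ×ˢ A) = P p.2 A)
    -- the kernel P*
    (Pstar : Kernel (X × X) (X × X))
    (hPstar1 : ∀ p ∈ Cbar, Pstar p = Rbar p) (hPstar2 : ∀ p ∉ Cbar, Pstar p = Pbar p)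
    -- (A2)
    (Vbar : X × X → ℝ) (hVbar1 : ∀ p, 1 ≤ Vbar p) (hVbarm : Measurable Vbar)
    (lam b : ℝ) (hlam0 : 0 < lam) (hlam1 : lam < 1)
    (hdrift : ∀ p, ∫⁻ z, ENNReal.ofReal (Vbar z) ∂(Pstar p) ≤
      ENNReal.ofReal (lam * Vbar p + Set.indicator Cbar (fun _ => b) p))
    -- sup_{(x,x') ∈ C̄} R̄V̄(x,x') < ∞
    (hRVfin : ∀ p ∈ Cbar, ∫⁻ z, ENNReal.ofReal (Vbar z) ∂(Rbar p) ≠ ⊤)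
    (hRVbdd : BddAbove ((fun p => (∫⁻ z, ENNReal.ofReal (Vbar z) ∂(Rbar p)).toReal) '' Cbar))
    -- initial distributions with ξ ⊗ ξ'(V̄) < ∞
    (ξ ξ' : Measure X) [IsProbabilityMeasure ξ] [IsProbabilityMeasure ξ']
    (hVint : ∫⁻ p, ENNReal.ofReal (Vbar p) ∂(ξ.prod ξ') ≠ ⊤)
    -- ℙ is the law P*_{ξ⊗ξ'} of the chain with kernel P* and initial law ξ ⊗ ξ',
    -- characterized through its finite-dimensional distributions
    (ℙc : Measure (ℕ → X × X)) [IsProbabilityMeasure ℙc]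
    (hℙc : ∀ (n : ℕ) (φ : (Fin (n + 1) → X × X) → ℝ≥0∞), Measurable φ →
      ∫⁻ ω, φ (fun i => ω i) ∂ℙc = chainExp Pstar (ξ.prod ξ') n φ) :
    Supermartingale
      (fun (s : ℕ) (ω : ℕ → X × X) =>
        (lam ^ s)⁻¹ *
          ((max 1 ((1 - ε) * lam⁻¹ *
              sSup ((fun p => (∫⁻ z, ENNReal.ofReal (Vbar z) ∂(Rbar p)).toReal) '' Cbar)))
            ^ (Ncnt Cbar s ω))⁻¹ *
          (1 - ε) ^ (Ncnt Cbar s ω) * Vbar (ω s))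
      (coordFilt (X × X)) ℙc := by
  set S := sSup ((fun p => (∫⁻ z, ENNReal.ofReal (Vbar z) ∂(Rbar p)).toReal) '' Cbar) with hS
  set B := max 1 ((1 - ε) * lam⁻¹ * S) with hB
  have hB0 : 0 < B := lt_of_lt_of_le one_pos (le_max_left _ _)
  have hε : 0 < 1 - ε := by linarith
  have hV0 : ∀ p, 0 ≤ Vbar p := fun p => zero_le_one.trans (hVbar1 p)
  refine supermartingale_of_step Pstar (ξ.prod ξ') ℙc hℙc _ ?_ ?_ ?_ ?_ ?_
  · intro s
    have hN := measurable_Ncnt hCbar s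
    have hBN : Measurable fun ω => B ^ Ncnt Cbar s ω :=
      (measurable_of_countable (fun n : ℕ => B ^ n)).comp hN
    have hεN : Measurable fun ω => (1 - ε) ^ Ncnt Cbar s ω :=
      (measurable_of_countable (fun n : ℕ => (1 - ε) ^ n)).comp hN
    exact ((measurable_const.mul hBN.inv).mul hεN).mul (hVbarm.comp (measurable_pi_apply s))
  · intro s ω
    have := hV0 (ω s)
    positivity
  · intro s ω ω' h
    simp only [Ncnt_congr Cbar s fun k hk => h k hk.le, h s le_rfl]
  · intro s ω
    have hN : ∀ y, Ncnt Cbar (s + 1) (Function.update ω (s + 1) y) = Ncnt Cbar (s + 1) ω :=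
      fun y => Ncnt_congr _ _ fun k hk => Function.update_of_ne hk.ne _ _
    simp only [hN, Function.update_self]
    set c := (lam ^ (s + 1))⁻¹ * (B ^ Ncnt Cbar (s + 1) ω)⁻¹ * (1 - ε) ^ Ncnt Cbar (s + 1) ω
      with hc
    have hc0 : 0 ≤ c := by positivity
    simp only [ENNReal.ofReal_mul hc0]
    rw [lintegral_const_mul _ hVbarm.ennreal_ofReal]
    have hsucc : Ncnt Cbar (s + 1) ω =
        Ncnt Cbar s ω + Set.indicator Cbar (fun _ => (1 : ℕ)) (ω s) := by
      simp [Ncnt, Finset.sum_range_succ]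
    set n := Ncnt Cbar s ω with hn
    set d := (lam ^ s)⁻¹ * (B ^ n)⁻¹ * (1 - ε) ^ n with hd
    have hd0 : 0 ≤ d := by positivity
    by_cases hω : ω s ∈ Cbar
    · have hcd : c = d * (lam⁻¹ * B⁻¹ * (1 - ε)) := by
        rw [hc, hd, hsucc, Set.indicator_of_mem hω]
        simp only [pow_succ, mul_inv]
        ring
      -- On `C̄`, the extra factor `B⁻¹` absorbs the bound `R̄V̄ ≤ S`, and `1 ≤ V̄`.
      have hR : ∫⁻ z, ENNReal.ofReal (Vbar z) ∂(Rbar (ω s)) ≤ ENNReal.ofReal S := by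
        rw [← ENNReal.ofReal_toReal (hRVfin _ hω)]
        exact ENNReal.ofReal_le_ofReal (le_csSup hRVbdd ⟨_, hω, rfl⟩)
      rw [hPstar1 _ hω]
      refine (mul_le_mul_right hR _).trans ?_
      rw [← ENNReal.ofReal_mul hc0, hcd, mul_assoc]
      refine ENNReal.ofReal_le_ofReal (mul_le_mul_of_nonneg_left ?_ hd0)
      refine le_trans ?_ (hVbar1 (ω s))
      have hle : (1 - ε) * lam⁻¹ * S ≤ B := le_max_right _ _
      calc lam⁻¹ * B⁻¹ * (1 - ε) * S = ((1 - ε) * lam⁻¹ * S) / B := by ring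
        _ ≤ 1 := (div_le_one hB0).mpr hle
    · have hcd : c = d * lam⁻¹ := by
        rw [hc, hd, hsucc, Set.indicator_of_notMem hω]
        simp only [pow_succ, mul_inv, add_zero]
        ring
      have hD := hdrift (ω s)
      rw [Set.indicator_of_notMem hω, add_zero] at hD
      refine (mul_le_mul_right hD _).trans ?_
      rw [← ENNReal.ofReal_mul hc0, hcd]
      refine ENNReal.ofReal_le_ofReal (le_of_eq ?_)
      field_simp
  · simpa [Ncnt] using hVint
end

section
/- Let f : X → [1,∞) be a measurable function with f(x) + f(x') ≤ 2 V̄(x,x') for all (x,x') ∈ X × X. Then for all n ≥ 1, all j ∈ {1, …, n+1}, and all probability measures ξ, ξ' on X: (i) ‖ξP^n − ξ'P^n‖_TV ≤ 2(1−ε)^j 1(j ≤ n) + 2 λ^n B^{j−1} (ξ⊗ξ')(V̄), and (ii) ‖ξP^n − ξ'P^n‖_f ≤ 2(1−ε)^j (b(1−λ)^{-1} + λ^n (ξ⊗ξ')(V̄)) 1(j ≤ n) + 2 λ^n B^{j−1} (ξ⊗ξ')(V̄). -/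
/-! Two copies of the chain are run together until they couple. The law of the pair *before* coupling
is a sub-probability measure on `X × X`, propagated by the sub-Markov kernel `T` which equals `P̄` off
`C̄` and `(1 - ε) R̄` on `C̄`; the mass that couples in one step is the same measure (`ε ν` on `C̄`, zero
elsewhere) in both coordinates. Hence `ξPⁿ` and `ξ'Pⁿ` are the two marginals of `(ξ ⊗ ξ') Tⁿ` plus a
common measure (`exists_common_part`), so their `f`-distance is at most the integral of
`f(x) + f(x')` against `(ξ ⊗ ξ') Tⁿ` (`fDist_le_of_common_part`).

It remains to bound `Tⁿ W` for `W = 1` and `W = V̄`. Probabilistically, one splits according to whether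
`C̄` has been visited at least `j` times: such paths carry a factor `(1 - ε)^j`, and the others are
controlled by the drift, each of the at most `j - 1` visits costing a factor `B`. This is
`kernelOp_iterate_le`, proved by induction on `n`. Finally `P*ⁿ V̄` is bounded by iterating the drift
(`lintegral_iterMeas_le_of_drift`). -/

open MeasureTheory ProbabilityTheory Set
open scoped ENNReal

/-- The `f`-total variation distance between two measures:
`‖μ - ν‖_f = sup_{|φ| ≤ f} |μ(φ) - ν(φ)|`. -/
noncomputable def fDist {X : Type*} [MeasurableSpace X] (f : X → ℝ) (μ ν : Measure X) : ℝ≥0∞ :=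
  ⨆ (φ : X → ℝ) (_ : Measurable φ) (_ : ∀ x, |φ x| ≤ f x) (_ : Integrable φ μ)
    (_ : Integrable φ ν), ENNReal.ofReal |∫ x, φ x ∂μ - ∫ x, φ x ∂ν|

/-- `iterMeas P ξ n = ξ Pⁿ`, the distribution after `n` steps of the kernel `P` started at `ξ`. -/
noncomputable def iterMeas {X : Type*} [MeasurableSpace X] (P : Kernel X X) (ξ : Measure X) :
    ℕ → Measure X
  | 0 => ξ
  | n + 1 => (iterMeas P ξ n).bind (fun x => P x)

/-- The action `g ↦ T g`, `(T g)(x) = ∫ g dT(x, ·)`, of a kernel on nonnegative functions. -/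
noncomputable def kernelOp {Y : Type*} [MeasurableSpace Y] (T : Kernel Y Y) (g : Y → ℝ≥0∞) :
    Y → ℝ≥0∞ :=
  fun p => ∫⁻ z, g z ∂(T p)

lemma measurable_kernelOp_iterate {Y : Type*} [MeasurableSpace Y] (T : Kernel Y Y)
    {g : Y → ℝ≥0∞} (hg : Measurable g) (n : ℕ) : Measurable ((kernelOp T)^[n] g) := by
  induction n with
  | zero => exact hg
  | succ n ih =>
    rw [Function.iterate_succ_apply']
    exact ih.lintegral_kernel

lemma lintegral_iterMeas_succ {Y : Type*} [MeasurableSpace Y] (T : Kernel Y Y) (μ : Measure Y)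
    {g : Y → ℝ≥0∞} (hg : Measurable g) (n : ℕ) :
    ∫⁻ z, g z ∂(iterMeas T μ (n + 1)) = ∫⁻ z, kernelOp T g z ∂(iterMeas T μ n) := by
  rw [iterMeas]
  exact Measure.lintegral_bind T.measurable.aemeasurable hg.aemeasurable

lemma lintegral_iterMeas {Y : Type*} [MeasurableSpace Y] (T : Kernel Y Y) (μ : Measure Y)
    (n : ℕ) {g : Y → ℝ≥0∞} (hg : Measurable g) :
    ∫⁻ z, g z ∂(iterMeas T μ n) = ∫⁻ z, (kernelOp T)^[n] g z ∂μ := by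
  induction n generalizing g with
  | zero => rfl
  | succ n ih =>
    rw [lintegral_iterMeas_succ T μ hg, ih (g := kernelOp T g) hg.lintegral_kernel,
      Function.iterate_succ_apply]

/-- One step of the propagation of a common part, for either coordinate projection `π`. -/
lemma common_part_step {X : Type*} [MeasurableSpace X] (P : Kernel X X)
    (T : Kernel (X × X) (X × X)) (N : Kernel (X × X) X) (π : X × X → X) (hπ : Measurable π)
    (h : ∀ p, (T p).map π + N p = P (π p)) (m : Measure (X × X)) (ρ : Measure X) :
    (m.map π + ρ).bind P = (m.bind T).map π + (ρ.bind P + m.bind N) := by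
  ext A hA
  have hPA : Measurable fun x => P x A := P.measurable_coe hA
  have hTA : Measurable fun p => T p (π ⁻¹' A) := T.measurable_coe (hπ hA)
  have hsplit : ∫⁻ p, P (π p) A ∂m = ∫⁻ p, T p (π ⁻¹' A) ∂m + ∫⁻ p, N p A ∂m := by
    rw [← lintegral_add_left hTA]
    refine lintegral_congr fun p => ?_
    rw [← h p, Measure.add_apply, Measure.map_apply hπ hA]
  rw [Measure.bind_apply hA P.measurable.aemeasurable, lintegral_add_measure,
    lintegral_map hPA hπ, hsplit, Measure.add_apply, Measure.add_apply,
    Measure.map_apply hπ hA, Measure.bind_apply (hπ hA) T.measurable.aemeasurable,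
    Measure.bind_apply hA P.measurable.aemeasurable,
    Measure.bind_apply hA N.measurable.aemeasurable, add_right_comm, add_assoc]

/-- If one step of `P` from either coordinate of `p` is the corresponding marginal of `T p` plus a
common part `N p`, then the same holds for `n` steps, for some common measure `ρ`. -/
lemma exists_common_part {X : Type*} [MeasurableSpace X] (P : Kernel X X)
    (T : Kernel (X × X) (X × X)) (N : Kernel (X × X) X)
    (h1 : ∀ p, (T p).map Prod.fst + N p = P p.1) (h2 : ∀ p, (T p).map Prod.snd + N p = P p.2)
    (ξ ξ' : Measure X) (μ : Measure (X × X)) (hμ1 : μ.map Prod.fst = ξ)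
    (hμ2 : μ.map Prod.snd = ξ') (n : ℕ) :
    ∃ ρ : Measure X, iterMeas P ξ n = (iterMeas T μ n).map Prod.fst + ρ ∧
      iterMeas P ξ' n = (iterMeas T μ n).map Prod.snd + ρ := by
  induction n with
  | zero => exact ⟨0, by simp [iterMeas, hμ1, hμ2]⟩
  | succ n ih =>
    obtain ⟨ρ, hρ1, hρ2⟩ := ih
    refine ⟨ρ.bind P + (iterMeas T μ n).bind N, ?_, ?_⟩
    · rw [iterMeas, hρ1]
      exact common_part_step P T N Prod.fst measurable_fst h1 _ ρ
    · rw [iterMeas, hρ2]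
      exact common_part_step P T N Prod.snd measurable_snd h2 _ ρ

/-- A common part `ρ` of two measures cancels in their `f`-distance. -/
lemma fDist_le_of_common_part {X : Type*} [MeasurableSpace X] (f : X → ℝ)
    (m : Measure (X × X)) (ρ : Measure X) (W : X × X → ℝ≥0∞)
    (hW : ∀ x x', ENNReal.ofReal (f x) + ENNReal.ofReal (f x') ≤ 2 * W (x, x')) :
    fDist f (m.map Prod.fst + ρ) (m.map Prod.snd + ρ) ≤ ∫⁻ p, 2 * W p ∂m := by
  refine iSup_le fun φ => iSup_le fun hφ => iSup_le fun hφf => iSup_le fun hi1 =>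
    iSup_le fun hi2 => ?_
  rw [integral_add_measure hi1.left_of_add_measure hi1.right_of_add_measure,
    integral_add_measure hi2.left_of_add_measure hi2.right_of_add_measure,
    add_sub_add_right_eq_sub]
  have key : ∀ κ : Measure X, ENNReal.ofReal |∫ x, φ x ∂κ| ≤ ∫⁻ x, ENNReal.ofReal |φ x| ∂κ := by
    intro κ
    have := enorm_integral_le_lintegral_enorm (μ := κ) φ
    simpa only [Real.enorm_eq_ofReal_abs] using this
  have hm : Measurable fun x => ENNReal.ofReal |φ x| := hφ.abs.ennreal_ofReal
  calc ENNReal.ofReal |∫ x, φ x ∂(m.map Prod.fst) - ∫ x, φ x ∂(m.map Prod.snd)|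
      ≤ ENNReal.ofReal (|∫ x, φ x ∂(m.map Prod.fst)| + |∫ x, φ x ∂(m.map Prod.snd)|) :=
        ENNReal.ofReal_le_ofReal (abs_sub _ _)
    _ = ENNReal.ofReal |∫ x, φ x ∂(m.map Prod.fst)|
          + ENNReal.ofReal |∫ x, φ x ∂(m.map Prod.snd)| :=
        ENNReal.ofReal_add (abs_nonneg _) (abs_nonneg _)
    _ ≤ ∫⁻ x, ENNReal.ofReal |φ x| ∂(m.map Prod.fst)
          + ∫⁻ x, ENNReal.ofReal |φ x| ∂(m.map Prod.snd) := add_le_add (key _) (key _)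
    _ = ∫⁻ p, (ENNReal.ofReal |φ p.1| + ENNReal.ofReal |φ p.2|) ∂m := by
        rw [lintegral_map hm measurable_fst, lintegral_map hm measurable_snd]
        exact (lintegral_add_left (hm.comp measurable_fst) _).symm
    _ ≤ ∫⁻ p, 2 * W p ∂m := by
        refine lintegral_mono fun p => ?_
        exact (add_le_add (ENNReal.ofReal_le_ofReal (hφf _))
          (ENNReal.ofReal_le_ofReal (hφf _))).trans (hW p.1 p.2)

/-- Split of `Tⁿ W` according to whether at least `j = m + 1` visits to `C` occur before time `n`.
Here `T` is `Q` off `C` and `e Q` on `C`. The hypotheses `hoff` and `hon` say that one step of `T`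
contracts `V` by `l` off `C`, and up to the factor `B` on `C`. -/
lemma kernelOp_iterate_le {Y : Type*} [MeasurableSpace Y] (T Q : Kernel Y Y) (C : Set Y)
    (e l B : ℝ≥0∞) (he : e ≤ 1) (hB : 1 ≤ B)
    (hTon : ∀ p ∈ C, T p = e • Q p) (hToff : ∀ p ∉ C, T p = Q p)
    (V W : Y → ℝ≥0∞) (hV : Measurable V) (hW : Measurable W) (hWV : ∀ p, W p ≤ V p)
    (hoff : ∀ p ∉ C, ∫⁻ z, V z ∂(Q p) ≤ l * V p)
    (hon : ∀ p ∈ C, e * ∫⁻ z, V z ∂(Q p) ≤ l * B * V p) (n m : ℕ) (p : Y) :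
    (kernelOp T)^[n] W p ≤
      (if m + 1 ≤ n then e ^ (m + 1) * (kernelOp Q)^[n] W p else 0) + l ^ n * B ^ m * V p := by
  have hDm := measurable_kernelOp_iterate Q hW
  have hTQ : ∀ n p, (kernelOp T)^[n] W p ≤ (kernelOp Q)^[n] W p := by
    intro n
    induction n with
    | zero => exact fun p => le_rfl
    | succ n ih =>
      intro p
      rw [Function.iterate_succ_apply', Function.iterate_succ_apply']
      refine (lintegral_mono ih).trans ?_
      by_cases hp : p ∈ C
      · rw [hTon p hp, lintegral_smul_measure]
        exact mul_le_of_le_one_left' he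
      · rw [hToff p hp]
        rfl
  -- one step of `Q` applied to the bound at time `n`
  have hstep : ∀ n m p, ∫⁻ z, ((if m + 1 ≤ n then e ^ (m + 1) * (kernelOp Q)^[n] W z else 0)
      + l ^ n * B ^ m * V z) ∂(Q p) =
      (if m + 1 ≤ n then e ^ (m + 1) * (kernelOp Q)^[n + 1] W p else 0)
        + l ^ n * B ^ m * ∫⁻ z, V z ∂(Q p) := by
    intro n m p
    rw [lintegral_add_right _ (hV.const_mul _), lintegral_const_mul _ hV]
    congr 1
    split_ifs
    · rw [lintegral_const_mul _ (hDm n), Function.iterate_succ_apply']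
      rfl
    · simp
  induction n generalizing m p with
  | zero =>
    simp only [Function.iterate_zero, id_eq, pow_zero, one_mul]
    refine (hWV p).trans (le_trans ?_ le_add_self)
    exact le_mul_of_one_le_left' (one_le_pow₀ hB)
  | succ n ih =>
    by_cases hp : p ∈ C
    · have hT : (kernelOp T)^[n + 1] W p = e * ∫⁻ z, (kernelOp T)^[n] W z ∂(Q p) := by
        rw [Function.iterate_succ_apply', kernelOp, hTon p hp, lintegral_smul_measure, smul_eq_mul]
      rw [hT]
      cases m with
      | zero =>
        -- the present visit already makes `j = 1`, so the bound `T ≤ Q` suffices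
        rw [if_pos (by omega), zero_add, pow_one, Function.iterate_succ_apply']
        exact le_add_right (mul_le_mul_right (lintegral_mono (hTQ n)) e)
      | succ m =>
        refine (mul_le_mul_right (lintegral_mono (ih m)) e).trans ?_
        rw [hstep, mul_add]
        refine add_le_add ?_ ?_
        · by_cases h : m + 1 ≤ n
          · rw [if_pos h, if_pos (by omega), ← mul_assoc, ← pow_succ']
          · rw [if_neg h, mul_zero]
            exact zero_le
        · calc e * (l ^ n * B ^ m * ∫⁻ z, V z ∂(Q p))
              = l ^ n * B ^ m * (e * ∫⁻ z, V z ∂(Q p)) := by ring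
            _ ≤ l ^ n * B ^ m * (l * B * V p) := mul_le_mul_right (hon p hp) _
            _ = l ^ (n + 1) * B ^ (m + 1) * V p := by ring
    · have hT : (kernelOp T)^[n + 1] W p = ∫⁻ z, (kernelOp T)^[n] W z ∂(Q p) := by
        rw [Function.iterate_succ_apply', kernelOp, hToff p hp]
      rw [hT]
      refine (lintegral_mono (ih m)).trans ?_
      rw [hstep]
      refine add_le_add ?_ ?_
      · by_cases h : m + 1 ≤ n
        · rw [if_pos h, if_pos (by omega)]
        · rw [if_neg h]
          exact zero_le
      · calc l ^ n * B ^ m * ∫⁻ z, V z ∂(Q p)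
            ≤ l ^ n * B ^ m * (l * V p) := mul_le_mul_right (hoff p hp) _
          _ = l ^ (n + 1) * B ^ m * V p := by ring

lemma isProbabilityMeasure_iterMeas {Y : Type*} [MeasurableSpace Y] (Q : Kernel Y Y)
    [IsMarkovKernel Q] (μ : Measure Y) [IsProbabilityMeasure μ] (n : ℕ) :
    IsProbabilityMeasure (iterMeas Q μ n) := by
  induction n with
  | zero => assumption
  | succ n ih =>
    exact isProbabilityMeasure_bind Q.measurable.aemeasurable (ae_of_all _ fun _ => inferInstance)

/-- Iterated drift: `K` plays the role of `c / (1 - l)`. -/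
lemma lintegral_iterMeas_le_of_drift {Y : Type*} [MeasurableSpace Y] (Q : Kernel Y Y)
    [IsMarkovKernel Q] (μ : Measure Y) [IsProbabilityMeasure μ] (V : Y → ℝ≥0∞)
    (hV : Measurable V) (l c K : ℝ≥0∞) (hQ : ∀ p, ∫⁻ z, V z ∂(Q p) ≤ l * V p + c)
    (hK : l * K + c ≤ K) (n : ℕ) :
    ∫⁻ z, V z ∂(iterMeas Q μ n) ≤ K + l ^ n * ∫⁻ z, V z ∂μ := by
  induction n with
  | zero => simp [iterMeas]
  | succ n ih =>
    have := isProbabilityMeasure_iterMeas Q μ n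
    rw [lintegral_iterMeas_succ Q μ hV]
    calc ∫⁻ z, kernelOp Q V z ∂(iterMeas Q μ n)
        ≤ ∫⁻ z, (l * V z + c) ∂(iterMeas Q μ n) := lintegral_mono hQ
      _ = l * ∫⁻ z, V z ∂(iterMeas Q μ n) + c := by
          rw [lintegral_add_right _ measurable_const, lintegral_const_mul _ hV]
          simp
      _ ≤ l * (K + l ^ n * ∫⁻ z, V z ∂μ) + c := by gcongr
      _ = (l * K + c) + l ^ (n + 1) * ∫⁻ z, V z ∂μ := by ring
      _ ≤ K + l ^ (n + 1) * ∫⁻ z, V z ∂μ := by gcongr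

/-- Theorem 2: quantitative bounds on `‖ξPⁿ - ξ'Pⁿ‖_TV` and `‖ξPⁿ - ξ'Pⁿ‖_f` under the
minorization condition (A1) and the bivariate drift condition (A2). -/
theorem quantitative_bounds_time_homogeneous
    {X : Type*} [MeasurableSpace X] (P : Kernel X X) [IsMarkovKernel P]
    -- (A1): coupling set, minorization constant and minorizing measures
    (Cbar : Set (X × X)) (hCbar : MeasurableSet Cbar)
    (ε : ℝ) (hε0 : 0 < ε) (hε1 : ε < 1)
    (ν : X × X → Measure X) (hν : ∀ p ∈ Cbar, IsProbabilityMeasure (ν p))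
    (hminor : ∀ p ∈ Cbar, ∀ A : Set X, MeasurableSet A →
      ENNReal.ofReal ε * ν p A ≤ min (P p.1 A) (P p.2 A))
    -- the residual kernel R̄ with marginals (1-ε)⁻¹(P - εν)
    (Rbar : Kernel (X × X) (X × X)) [IsMarkovKernel Rbar]
    (hRbar1 : ∀ p ∈ Cbar, ∀ A : Set X, MeasurableSet A →
      ENNReal.ofReal (1 - ε) * Rbar p (A ×ˢ Set.univ) + ENNReal.ofReal ε * ν p A = P p.1 A)
    (hRbar2 : ∀ p ∈ Cbar, ∀ A : Set X, MeasurableSet A →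
      ENNReal.ofReal (1 - ε) * Rbar p (Set.univ ×ˢ A) + ENNReal.ofReal ε * ν p A = P p.2 A)
    -- the kernel P̄
    (Pbar : Kernel (X × X) (X × X)) [IsMarkovKernel Pbar]
    (hPbar1 : ∀ p ∈ Cbar, ∀ A A' : Set X, MeasurableSet A → MeasurableSet A' →
      Pbar p (A ×ˢ A') = ENNReal.ofReal (1 - ε) * Rbar p (A ×ˢ A') +
        ENNReal.ofReal ε * ν p (A ∩ A'))
    (hPbar2 : ∀ p ∉ Cbar, ∀ A : Set X, MeasurableSet A →
      Pbar p (A ×ˢ Set.univ) = P p.1 A ∧ Pbar p (Set.univ ×ˢ A) = P p.2 A)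
    -- the kernel P*
    (Pstar : Kernel (X × X) (X × X))
    (hPstar1 : ∀ p ∈ Cbar, Pstar p = Rbar p) (hPstar2 : ∀ p ∉ Cbar, Pstar p = Pbar p)
    -- (A2): bivariate drift condition for P*
    (Vbar : X × X → ℝ) (hVbar1 : ∀ p, 1 ≤ Vbar p) (hVbarm : Measurable Vbar)
    (lam b : ℝ) (hlam0 : 0 < lam) (hlam1 : lam < 1)
    (hdrift : ∀ p, ∫⁻ z, ENNReal.ofReal (Vbar z) ∂(Pstar p) ≤
      ENNReal.ofReal (lam * Vbar p + Set.indicator Cbar (fun _ => b) p))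
    -- the function f with f(x) + f(x') ≤ 2 V̄(x,x')
    (f : X → ℝ) (hf1 : ∀ x, 1 ≤ f x) (hfm : Measurable f)
    (hfV : ∀ x x' : X, f x + f x' ≤ 2 * Vbar (x, x'))
    (n j : ℕ) (hn : 1 ≤ n) (hj1 : 1 ≤ j) (hj2 : j ≤ n + 1)
    (ξ ξ' : Measure X) [IsProbabilityMeasure ξ] [IsProbabilityMeasure ξ'] :
    fDist (fun _ => 1) (iterMeas P ξ n) (iterMeas P ξ' n) ≤
      (if j ≤ n then ENNReal.ofReal (2 * (1 - ε) ^ j) else 0) +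
        ENNReal.ofReal (2 * lam ^ n) *
          (max 1 (ENNReal.ofReal (1 - ε) * (ENNReal.ofReal lam)⁻¹ *
            ⨆ p ∈ Cbar, ∫⁻ z, ENNReal.ofReal (Vbar z) ∂(Rbar p))) ^ (j - 1) *
          ∫⁻ p, ENNReal.ofReal (Vbar p) ∂(ξ.prod ξ') ∧
    fDist f (iterMeas P ξ n) (iterMeas P ξ' n) ≤
      (if j ≤ n then ENNReal.ofReal (2 * (1 - ε) ^ j) *
          (ENNReal.ofReal (b / (1 - lam)) +
            ENNReal.ofReal (lam ^ n) * ∫⁻ p, ENNReal.ofReal (Vbar p) ∂(ξ.prod ξ')) else 0) +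
        ENNReal.ofReal (2 * lam ^ n) *
          (max 1 (ENNReal.ofReal (1 - ε) * (ENNReal.ofReal lam)⁻¹ *
            ⨆ p ∈ Cbar, ∫⁻ z, ENNReal.ofReal (Vbar z) ∂(Rbar p))) ^ (j - 1) *
          ∫⁻ p, ENNReal.ofReal (Vbar p) ∂(ξ.prod ξ') := by
  classical
  have hε : (0 : ℝ) < 1 - ε := by linarith
  have hl : (0 : ℝ) < 1 - lam := by linarith
  set e : ℝ≥0∞ := ENNReal.ofReal (1 - ε) with he
  set l : ℝ≥0∞ := ENNReal.ofReal lam with hldef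
  set V : X × X → ℝ≥0∞ := fun p => ENNReal.ofReal (Vbar p) with hVdef
  set B : ℝ≥0∞ := max 1 (e * l⁻¹ * ⨆ p ∈ Cbar, ∫⁻ z, V z ∂(Rbar p)) with hB
  have hVm : Measurable V := hVbarm.ennreal_ofReal
  have hV1 : ∀ p, 1 ≤ V p := fun p => by simpa [hVdef] using hVbar1 p
  have he1 : e ≤ 1 := by
    rw [he]; exact ENNReal.ofReal_le_one.2 (by linarith)
  have hl0 : l ≠ 0 := by simpa [hldef] using hlam0
  have hltop : l ≠ ∞ := ENNReal.ofReal_ne_top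
  have hPs : IsMarkovKernel Pstar := ⟨fun p => by
    by_cases hp : p ∈ Cbar
    · rw [hPstar1 p hp]; infer_instance
    · rw [hPstar2 p hp]; infer_instance⟩
  -- the sub-Markov kernel of the uncoupled pair
  let T : Kernel (X × X) (X × X) :=
    { toFun := fun p => if p ∈ Cbar then e • Pstar p else Pstar p
      measurable' := Measurable.ite hCbar
        (Measure.measurable_of_measurable_coe _ fun A hA => (Pstar.measurable_coe hA).const_mul e)
        Pstar.measurable }
  have hTon : ∀ p ∈ Cbar, T p = e • Pstar p := fun p hp => if_pos hp
  have hToff : ∀ p ∉ Cbar, T p = Pstar p := fun p hp => if_neg hp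
  -- measurability of `ν` on `C̄` follows from `ε ν = P - (1 - ε) R̄(· × X)`
  have hνeq : ∀ p ∈ Cbar, ∀ A : Set X, MeasurableSet A →
      ENNReal.ofReal ε * ν p A = P p.1 A - e * Rbar p (A ×ˢ Set.univ) := by
    intro p hp A hA
    rw [← hRbar1 p hp A hA]
    exact (ENNReal.add_sub_cancel_left
      (ENNReal.mul_ne_top ENNReal.ofReal_ne_top (measure_ne_top _ _))).symm
  let N : Kernel (X × X) X :=
    { toFun := fun p => if p ∈ Cbar then ENNReal.ofReal ε • ν p else 0
      measurable' := by
        refine Measure.measurable_of_measurable_coe _ fun A hA => ?_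
        have : (fun p => (if p ∈ Cbar then ENNReal.ofReal ε • ν p else 0 : Measure X) A) =
            fun p => if p ∈ Cbar then P p.1 A - e * Rbar p (A ×ˢ Set.univ) else 0 := by
          funext p
          by_cases hp : p ∈ Cbar
          · simp only [if_pos hp, ← hνeq p hp A hA, Measure.smul_apply, smul_eq_mul]
          · simp only [if_neg hp, Measure.coe_zero, Pi.zero_apply]
        rw [this]
        exact Measurable.ite hCbar (((P.measurable_coe hA).comp measurable_fst).sub
          ((Rbar.measurable_coe (hA.prod MeasurableSet.univ)).const_mul e)) measurable_const }
  have hNon : ∀ p ∈ Cbar, N p = ENNReal.ofReal ε • ν p := fun p hp => if_pos hp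
  have hNoff : ∀ p ∉ Cbar, N p = 0 := fun p hp => if_neg hp
  have h1 : ∀ p, (T p).map Prod.fst + N p = P p.1 := by
    intro p
    ext A hA
    rw [Measure.add_apply, Measure.map_apply measurable_fst hA, ← Set.prod_univ]
    by_cases hp : p ∈ Cbar
    · rw [hTon p hp, hNon p hp, hPstar1 p hp, ← hRbar1 p hp A hA]
      rfl
    · rw [hToff p hp, hNoff p hp, hPstar2 p hp, (hPbar2 p hp A hA).1]
      simp
  have h2 : ∀ p, (T p).map Prod.snd + N p = P p.2 := by
    intro p
    ext A hA
    rw [Measure.add_apply, Measure.map_apply measurable_snd hA, ← Set.univ_prod]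
    by_cases hp : p ∈ Cbar
    · rw [hTon p hp, hNon p hp, hPstar1 p hp, ← hRbar2 p hp A hA]
      rfl
    · rw [hToff p hp, hNoff p hp, hPstar2 p hp, (hPbar2 p hp A hA).2]
      simp
  obtain ⟨ρ, hρ1, hρ2⟩ := exists_common_part P T N h1 h2 ξ ξ' (ξ.prod ξ')
    (by simp)
    (by simp) n
  have hoff : ∀ p ∉ Cbar, ∫⁻ z, V z ∂(Pstar p) ≤ l * V p := by
    intro p hp
    have := hdrift p
    rwa [Set.indicator_of_notMem hp, add_zero, ENNReal.ofReal_mul hlam0.le] at this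
  have hon : ∀ p ∈ Cbar, e * ∫⁻ z, V z ∂(Pstar p) ≤ l * B * V p := by
    intro p hp
    rw [hPstar1 p hp]
    calc e * ∫⁻ z, V z ∂(Rbar p)
        ≤ e * ⨆ p ∈ Cbar, ∫⁻ z, V z ∂(Rbar p) :=
          mul_le_mul_right (le_iSup₂ (f := fun p (_ : p ∈ Cbar) => ∫⁻ z, V z ∂(Rbar p)) p hp) _
      _ = l * (e * l⁻¹ * ⨆ p ∈ Cbar, ∫⁻ z, V z ∂(Rbar p)) := by
          rw [← mul_assoc, mul_left_comm l e, ENNReal.mul_inv_cancel hl0 hltop, mul_one]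
      _ ≤ l * B := mul_le_mul_right (le_max_right _ _) _
      _ ≤ l * B * V p := le_mul_of_one_le_right' (hV1 p)
  have hdr : ∀ p, ∫⁻ z, V z ∂(Pstar p) ≤ l * V p + ENNReal.ofReal b := by
    intro p
    by_cases hp : p ∈ Cbar
    · have := hdrift p
      rw [Set.indicator_of_mem hp] at this
      refine this.trans (ENNReal.ofReal_add_le.trans ?_)
      rw [ENNReal.ofReal_mul hlam0.le]
    · exact (hoff p hp).trans le_self_add
  -- `b` may be negative; then both `b` and `b / (1 - lam)` truncate to `0` in `ℝ≥0∞`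
  have hK : l * ENNReal.ofReal (b / (1 - lam)) + ENNReal.ofReal b ≤
      ENNReal.ofReal (b / (1 - lam)) := by
    rcases le_total b 0 with hb | hb
    · rw [ENNReal.ofReal_of_nonpos hb,
        ENNReal.ofReal_of_nonpos (div_nonpos_of_nonpos_of_nonneg hb hl.le)]
      simp
    · rw [hldef, ← ENNReal.ofReal_mul hlam0.le, ← ENNReal.ofReal_add (by positivity) hb]
      refine ENNReal.ofReal_le_ofReal (le_of_eq ?_)
      field_simp
      ring
  -- the common form of both bounds, for `W = 1` and `W = V`
  have main : ∀ (g : X → ℝ) (W : X × X → ℝ≥0∞), Measurable W → (∀ p, W p ≤ V p) →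
      (∀ x x', ENNReal.ofReal (g x) + ENNReal.ofReal (g x') ≤ 2 * W (x, x')) →
      fDist g (iterMeas P ξ n) (iterMeas P ξ' n) ≤
        (if j ≤ n then 2 * e ^ j * ∫⁻ p, W p ∂(iterMeas Pstar (ξ.prod ξ') n) else 0) +
          2 * l ^ n * B ^ (j - 1) * ∫⁻ p, V p ∂(ξ.prod ξ') := by
    intro g W hW hWV hg
    rw [hρ1, hρ2]
    refine (fDist_le_of_common_part g _ ρ W hg).trans ?_
    rw [lintegral_const_mul _ hW, lintegral_iterMeas T _ n hW, lintegral_iterMeas Pstar _ n hW]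
    have hk := kernelOp_iterate_le T Pstar Cbar e l B he1 (le_max_left _ _) hTon hToff V W hVm hW
      hWV hoff hon n (j - 1)
    rw [Nat.sub_add_cancel hj1] at hk
    refine (mul_le_mul_right (lintegral_mono hk) 2).trans (le_of_eq ?_)
    rw [lintegral_add_right _ (hVm.const_mul _), lintegral_const_mul _ hVm, mul_add]
    congr 1
    · split_ifs
      · rw [lintegral_const_mul _ (measurable_kernelOp_iterate Pstar hW n), mul_assoc]
      · simp
    · simp only [mul_assoc]
  have hc1 : ENNReal.ofReal (2 * lam ^ n) = 2 * l ^ n := by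
    rw [ENNReal.ofReal_mul (by norm_num), ENNReal.ofReal_pow hlam0.le, ENNReal.ofReal_ofNat]
  have hc2 : ENNReal.ofReal (2 * (1 - ε) ^ j) = 2 * e ^ j := by
    rw [ENNReal.ofReal_mul (by norm_num), ENNReal.ofReal_pow hε.le, ENNReal.ofReal_ofNat]
  have hc3 : ENNReal.ofReal (lam ^ n) = l ^ n := ENNReal.ofReal_pow hlam0.le n
  rw [hc1, hc2, hc3]
  have := isProbabilityMeasure_iterMeas Pstar (ξ.prod ξ') n
  constructor
  · refine (main (fun _ => 1) (fun _ => 1) measurable_const hV1 ?_).trans (le_of_eq ?_)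
    · intro x x'
      simp [one_add_one_eq_two]
    · simp
  · refine (main f V hVm (fun _ => le_rfl) ?_).trans ?_
    · intro x x'
      rw [← ENNReal.ofReal_add (by linarith [hf1 x]) (by linarith [hf1 x']),
        show (2 : ℝ≥0∞) = ENNReal.ofReal 2 by simp, ← ENNReal.ofReal_mul (by norm_num)]
      exact ENNReal.ofReal_le_ofReal (hfV x x')
    · refine add_le_add_left ?_ _
      split_ifs
      · exact mul_le_mul_right (lintegral_iterMeas_le_of_drift Pstar _ V hVm l _ _ hdr hK n) _
      · exact le_rfl
end

section
/- Assume (S). Then: (i) the set C̄ = C × C, the constant ε, and the constant family ν_{x,x'} = ν satisfy the minorization P(x,A) ∧ P(x',A) ≥ ε ν(A) for all (x,x') ∈ C × C and measurable A; and (ii) the kernel P*, defined as R̄(x,x'; A×A') := R(x,A)R(x',A') on C × C and P̄(x,x'; A×A') := P(x,A)P(x',A') off C × C, satisfies the bivariate drift condition P* V̄ ≤ λ V̄ + b 1_{C×C} with V̄(x,x') = (V(x) + V(x'))/2, λ = λ_c + b_c/(1+c), and b = max(cελ_c/(1−ε) − cb_c/(1+c), 0) + (b_c − ε)/(1−ε).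 -/
open MeasureTheory ProbabilityTheory Set
open scoped ENNReal

/-!
The functional `V̄` is additive, so its integral against a product of probability measures is the
mean of the two marginal integrals (`lintegral_prod_mean_le`), and everything reduces to univariate
bounds. Write `s` for the value of `V̄` at the starting point.

* On `C × C`, integrating `P = (1 - ε) R + ε ν` and using `∫ V dν ≥ 1` gives
  `R V ≤ (λ_c V + b_c - ε) / (1 - ε)` (`residual_lintegral_le`). The claimed bound then says
  `k s ≤ max (k c) 0` with `k = ε λ_c / (1 - ε) - b_c / (1 + c)`, which holds since `0 ≤ s ≤ c`.
* Off `C × C`, either both points lie outside `C`, or one does and then `2 s ≥ 1 + c`. In each case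
  the bound follows from the univariate drift, provided `b_c ≥ 0`.

Nonnegativity of `b_c` is a consequence of the drift condition (`drift_const_nonneg`): otherwise
`P V ≤ λ_c V` everywhere with `0 < λ_c < 1`, so that `inf V ≤ λ_c inf V`, contradicting `V ≥ 1`.
-/

lemma ofReal_le_lintegral {X : Type*} [MeasurableSpace X] (μ : Measure X) [IsProbabilityMeasure μ]
    {V : X → ℝ} {m : ℝ} (h : ∀ x, m ≤ V x) :
    ENNReal.ofReal m ≤ ∫⁻ y, ENNReal.ofReal (V y) ∂μ := by
  calc ENNReal.ofReal m = ∫⁻ _, ENNReal.ofReal m ∂μ := by simp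
    _ ≤ _ := lintegral_mono fun y => ENNReal.ofReal_le_ofReal (h y)

/-- A real upper bound for `∫ V dμ` is at least any positive lower bound of `V`; in particular the
truncation in `ENNReal.ofReal` is never active. -/
lemma le_of_lintegral_le {X : Type*} [MeasurableSpace X] (μ : Measure X) [IsProbabilityMeasure μ]
    {V : X → ℝ} {m a : ℝ} (hm : 0 < m) (h : ∀ x, m ≤ V x)
    (ha : ∫⁻ y, ENNReal.ofReal (V y) ∂μ ≤ ENNReal.ofReal a) : m ≤ a := by
  have h1 := (ofReal_le_lintegral μ h).trans ha
  rcases ENNReal.ofReal_le_ofReal_iff'.1 h1 with h2 | h2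
  · exact h2
  · linarith

lemma lintegral_prod_mean_le {X : Type*} [MeasurableSpace X] (μ μ' : Measure X)
    [IsProbabilityMeasure μ] [IsProbabilityMeasure μ']
    {V : X → ℝ} (hV1 : ∀ x, 1 ≤ V x) (hVm : Measurable V) {a a' t : ℝ}
    (ha : ∫⁻ y, ENNReal.ofReal (V y) ∂μ ≤ ENNReal.ofReal a)
    (ha' : ∫⁻ y, ENNReal.ofReal (V y) ∂μ' ≤ ENNReal.ofReal a')
    (ht : (a + a') / 2 ≤ t) :
    ∫⁻ z : X × X, ENNReal.ofReal ((V z.1 + V z.2) / 2) ∂(μ.prod μ') ≤ ENNReal.ofReal t := by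
  have h0 : 1 ≤ a := le_of_lintegral_le μ one_pos hV1 ha
  have h0' : 1 ≤ a' := le_of_lintegral_le μ' one_pos hV1 ha'
  have hsplit : ∀ z : X × X, ENNReal.ofReal ((V z.1 + V z.2) / 2) =
      ENNReal.ofReal (1 / 2) * (ENNReal.ofReal (V z.1) + ENNReal.ofReal (V z.2)) := by
    intro z
    have h1 := hV1 z.1
    have h2 := hV1 z.2
    rw [← ENNReal.ofReal_add (by linarith) (by linarith), ← ENNReal.ofReal_mul (by norm_num)]
    congr 1
    ring
  have e1 : ∫⁻ z : X × X, ENNReal.ofReal (V z.1) ∂(μ.prod μ') =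
      ∫⁻ y, ENNReal.ofReal (V y) ∂μ :=
    (measurePreserving_fst (μ := μ) (ν := μ')).lintegral_comp hVm.ennreal_ofReal
  have e2 : ∫⁻ z : X × X, ENNReal.ofReal (V z.2) ∂(μ.prod μ') =
      ∫⁻ y, ENNReal.ofReal (V y) ∂μ' :=
    (measurePreserving_snd (μ := μ) (ν := μ')).lintegral_comp hVm.ennreal_ofReal
  simp_rw [hsplit]
  rw [lintegral_const_mul' _ _ ENNReal.ofReal_ne_top,
    lintegral_add_left (by fun_prop), e1, e2]
  calc _ ≤ ENNReal.ofReal (1 / 2) * (ENNReal.ofReal a + ENNReal.ofReal a') := by gcongr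
    _ = ENNReal.ofReal ((a + a') / 2) := by
      rw [← ENNReal.ofReal_add (by linarith) (by linarith), ← ENNReal.ofReal_mul (by norm_num)]
      congr 1
      ring
    _ ≤ _ := ENNReal.ofReal_le_ofReal ht

lemma residual_lintegral_le {X : Type*} [MeasurableSpace X] (π ρ ν : Measure X)
    [IsProbabilityMeasure ν] {V : X → ℝ} (hV1 : ∀ x, 1 ≤ V x)
    {ε a : ℝ} (hε0 : 0 < ε) (hε1 : ε < 1)
    (hdecomp : ∀ A : Set X, MeasurableSet A →
      ENNReal.ofReal (1 - ε) * ρ A + ENNReal.ofReal ε * ν A = π A)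
    (ha : ∫⁻ y, ENNReal.ofReal (V y) ∂π ≤ ENNReal.ofReal a) :
    ∫⁻ y, ENNReal.ofReal (V y) ∂ρ ≤ ENNReal.ofReal ((a - ε) / (1 - ε)) := by
  have hπ : π = ENNReal.ofReal (1 - ε) • ρ + ENNReal.ofReal ε • ν := by
    ext A hA
    simp [← hdecomp A hA]
  rw [hπ, lintegral_add_measure, lintegral_smul_measure, lintegral_smul_measure] at ha
  simp only [smul_eq_mul] at ha
  have hν : 1 ≤ ∫⁻ y, ENNReal.ofReal (V y) ∂ν := by
    simpa using ofReal_le_lintegral ν hV1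
  have h1 : ENNReal.ofReal (1 - ε) * ∫⁻ y, ENNReal.ofReal (V y) ∂ρ + ENNReal.ofReal ε ≤
      ENNReal.ofReal a := by
    refine le_trans ?_ ha
    gcongr
    exact le_mul_of_one_le_right zero_le hν
  have h2 := ENNReal.le_sub_of_add_le_right ENNReal.ofReal_ne_top h1
  rw [← ENNReal.ofReal_sub _ hε0.le] at h2
  rw [ENNReal.ofReal_div_of_pos (by linarith), ENNReal.le_div_iff_mul_le
    (Or.inl (by simpa using hε1)) (Or.inl ENNReal.ofReal_ne_top), mul_comm]
  exact h2

lemma drift_const_nonneg {X : Type*} [MeasurableSpace X] [Nonempty X]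
    (P : Kernel X X) [IsMarkovKernel P] {V : X → ℝ} (hV1 : ∀ x, 1 ≤ V x) {c lamc bc : ℝ}
    (hlamc : lamc < 1)
    (hdrift : ∀ x, ∫⁻ y, ENNReal.ofReal (V y) ∂(P x) ≤
      ENNReal.ofReal (lamc * V x + Set.indicator {x' | V x' ≤ c} (fun _ => bc) x)) :
    0 ≤ bc := by
  by_contra! hbc
  have hm1 : 1 ≤ ⨅ x, V x := le_ciInf hV1
  have hm : ∀ x, ⨅ y, V y ≤ V x := ciInf_le ⟨1, by rintro _ ⟨x, rfl⟩; exact hV1 x⟩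
  have hkey : ∀ x, ⨅ y, V y ≤ lamc * V x := fun x => by
    have h1 := le_of_lintegral_le (P x) (by linarith) hm (hdrift x)
    have h2 : Set.indicator {x' | V x' ≤ c} (fun _ => bc) x ≤ 0 :=
      Set.indicator_nonpos (fun _ _ => hbc.le) x
    linarith
  have hpos : 0 < lamc := by
    obtain ⟨x⟩ := ‹Nonempty X›
    have h1 := hkey x
    have h2 := hV1 x
    by_contra! h
    nlinarith
  have h3 : (⨅ y, V y) / lamc ≤ ⨅ y, V y :=
    le_ciInf fun x => (div_le_iff₀' hpos).2 (hkey x)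
  rw [div_le_iff₀ hpos] at h3
  nlinarith

/-- Proposition 4: under the univariate condition (S), the set `C × C` is a coupling set for `P`
and the kernel `P*` (built from `R ⊗ R` on `C × C` and `P ⊗ P` elsewhere) satisfies the
bivariate drift condition with `V̄(x,x') = (V(x) + V(x'))/2`, `λ = λ_c + b_c/(1+c)` and
`b = max(cελ_c/(1-ε) - cb_c/(1+c), 0) + (b_c - ε)/(1-ε)`. -/
theorem bivariate_drift_from_univariate
    {X : Type*} [MeasurableSpace X] (P : Kernel X X) [IsMarkovKernel P]
    -- (S)
    (V : X → ℝ) (hV1 : ∀ x, 1 ≤ V x) (hVm : Measurable V)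
    (c : ℝ) (hc : 0 ≤ c)
    (ε : ℝ) (hε0 : 0 < ε) (hε1 : ε < 1)
    (ν : Measure X) [IsProbabilityMeasure ν]
    (hsmall : ∀ x, V x ≤ c → ∀ A : Set X, MeasurableSet A → ENNReal.ofReal ε * ν A ≤ P x A)
    (lamc bc : ℝ) (hlamc : lamc < 1)
    (hdrift : ∀ x, ∫⁻ y, ENNReal.ofReal (V y) ∂(P x) ≤
      ENNReal.ofReal (lamc * V x + Set.indicator {x' | V x' ≤ c} (fun _ => bc) x))
    (hlt : lamc + bc / (1 + c) < 1)
    -- the univariate residual kernel R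
    (R : Kernel X X) [IsMarkovKernel R]
    (hR : ∀ x, V x ≤ c → ∀ A : Set X, MeasurableSet A →
      ENNReal.ofReal (1 - ε) * R x A + ENNReal.ofReal ε * ν A = P x A) :
    -- (i) (A1) holds with C̄ = C × C and ν_{x,x'} = ν
    (∀ x x' : X, V x ≤ c → V x' ≤ c → ∀ A : Set X, MeasurableSet A →
      ENNReal.ofReal ε * ν A ≤ min (P x A) (P x' A)) ∧
    -- (ii) (A2) holds for P* with V̄(x,x') = (V(x)+V(x'))/2: on C × C (where P* = R ⊗ R) ...
    (∀ p : X × X, p ∈ {x | V x ≤ c} ×ˢ {x | V x ≤ c} →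
      ∫⁻ z : X × X, ENNReal.ofReal ((V z.1 + V z.2) / 2) ∂((R p.1).prod (R p.2)) ≤
        ENNReal.ofReal ((lamc + bc / (1 + c)) * ((V p.1 + V p.2) / 2) +
          (max (c * ε * lamc / (1 - ε) - c * bc / (1 + c)) 0 + (bc - ε) / (1 - ε)))) ∧
    -- ... and off C × C (where P* = P ⊗ P)
    (∀ p : X × X, p ∉ {x | V x ≤ c} ×ˢ {x | V x ≤ c} →
      ∫⁻ z : X × X, ENNReal.ofReal ((V z.1 + V z.2) / 2) ∂((P p.1).prod (P p.2)) ≤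
        ENNReal.ofReal ((lamc + bc / (1 + c)) * ((V p.1 + V p.2) / 2))) := by
  refine ⟨fun x x' hx hx' A hA => le_min (hsmall x hx A hA) (hsmall x' hx' A hA), ?_, ?_⟩
  · rintro ⟨x, x'⟩ ⟨hx, hx'⟩
    simp only [mem_ofPred_eq] at hx hx'
    have hd := hdrift x
    have hd' := hdrift x'
    rw [indicator_of_mem (by exact hx)] at hd
    rw [indicator_of_mem (by exact hx')] at hd'
    refine lintegral_prod_mean_le _ _ hV1 hVm
      (residual_lintegral_le _ _ ν hV1 hε0 hε1 (hR x hx) hd)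
      (residual_lintegral_le _ _ ν hV1 hε0 hε1 (hR x' hx') hd') ?_
    dsimp only
    have h1 := hV1 x
    have h1' := hV1 x'
    obtain ⟨s, hs⟩ : ∃ s, s = (V x + V x') / 2 := ⟨_, rfl⟩
    obtain ⟨k, hk⟩ : ∃ k, k = ε * lamc / (1 - ε) - bc / (1 + c) := ⟨_, rfl⟩
    have hne : 1 - ε ≠ 0 := by linarith
    have hne' : 1 + c ≠ 0 := by linarith
    have e1 : c * ε * lamc / (1 - ε) - c * bc / (1 + c) = k * c := by rw [hk]; ring
    have e2 : ((lamc * V x + bc - ε) / (1 - ε) + (lamc * V x' + bc - ε) / (1 - ε)) / 2 =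
        (lamc + bc / (1 + c)) * s + (k * s + (bc - ε) / (1 - ε)) := by
      rw [hk, hs]
      field_simp
      ring
    rw [e1, e2, ← hs]
    have hks : k * s ≤ max (k * c) 0 := by
      rcases le_total 0 k with h | h
      · exact le_max_of_le_left (mul_le_mul_of_nonneg_left (by linarith) h)
      · exact le_max_of_le_right (mul_nonpos_of_nonpos_of_nonneg h (by linarith))
    linarith
  · rintro ⟨x, x'⟩ hp
    have : Nonempty X := ⟨x⟩
    have hbc : 0 ≤ bc := drift_const_nonneg P hV1 hlamc hdrift
    refine lintegral_prod_mean_le _ _ hV1 hVm (hdrift x) (hdrift x') ?_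
    dsimp only
    have h1 := hV1 x
    have h1' := hV1 x'
    have hq : 0 ≤ bc / (1 + c) := by positivity
    have hqc : bc / (1 + c) * (1 + c) = bc := div_mul_cancel₀ _ (by linarith)
    simp only [mem_prod, mem_ofPred_eq, not_and_or, not_le] at hp
    simp only [indicator_apply, mem_ofPred_eq]
    split_ifs with h h' h' <;> rcases hp with hp | hp <;> first | linarith | nlinarith
end

section
/- For every δ > 0, the set C̄(δ) := {(x,x') ∈ ℝ^d × ℝ^d : ‖x − x'‖ ≤ δ} is a (1, ε(δ))-coupling set: ε(δ) > 0, and for all (x,x') ∈ C̄(δ) and all measurable A ⊆ ℝ^d, P(x,A) ∧ P(x',A) ≥ ε(δ) ν_{x,x'}(A), where ν_{x,x'}(A) = [∫_A (q(z−g(x)) + q(z−g(x')) − |q(z−g(x)) − q(z−g(x'))|) dz] / [2 − ∫ |q(z−g(x)) − q(z−g(x'))| dz] and ε(δ) = 1 − (1/2) sup_{(x,x') ∈ C̄(δ)} ∫ |q(z − (g(x) − g(x'))) − q(z)| dz. -/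
/-!
Write `a + b - |a - b| = 2 min(a, b)`: then `∫ |q(z - u) - q z| = 2 - 2 ∫ min(q(z - u), q z)`, so
`ε(δ) > 0` amounts to a lower bound, uniform in the admissible shifts `u = g x - g x'`, on the
overlap `∫ min(q(z - u), q z)`. Since `nn u ≤ L δ ≤ δ` and all norms on `ℝ^d` are equivalent,
these shifts lie in a ball of some radius `R` (`exists_bound_of_norm`). On the closed ball of
radius `R + 1` the continuous positive function `q` has a positive minimum `m`, and the overlap is
at least `m` times the volume of the unit ball (`exists_uniform_overlap`).

By translation invariance `∫ |q(z - g x) - q(z - g x')|` is one of the numbers under the supremum,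
call it `I`; thus `ε(δ) ≤ (2 - I) / 2`, while the numerator of `ν_{x,x'}(A)` is
`2 ∫_A min(q(z - g x), q(z - g x'))`. The minorization follows by division.
-/

open MeasureTheory Set
open scoped ENNReal

/-- Any norm `nn` on `ℝ^d`, given by its axioms, dominates a positive multiple of the standard norm. -/
lemma exists_bound_of_norm (d : ℕ) (nn : (Fin d → ℝ) → ℝ)
    (hnn0 : ∀ x, nn x = 0 ↔ x = 0)
    (hnnadd : ∀ x y, nn (x + y) ≤ nn x + nn y)
    (hnnsmul : ∀ (a : ℝ) x, nn (a • x) = |a| * nn x) :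
    ∃ C : ℝ, 0 < C ∧ ∀ x, ‖x‖ ≤ C * nn x := by
  have hnonneg : ∀ x, 0 ≤ nn x := by
    intro x
    have h1 := hnnadd x ((-1 : ℝ) • x)
    have h0 : nn (x + (-1 : ℝ) • x) = 0 := (hnn0 _).2 (by simp)
    rw [h0, hnnsmul] at h1
    norm_num at h1
    linarith
  let nI : Norm (Fin d → ℝ) := ⟨nn⟩
  have core : @NormedSpace.Core ℝ (Fin d → ℝ) _ _ _ nI :=
    @NormedSpace.Core.mk ℝ (Fin d → ℝ) _ _ _ nI
      (@SeminormedSpace.Core.mk ℝ (Fin d → ℝ) _ _ nI _ hnonneg hnnsmul hnnadd)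
      (fun x => hnn0 x)
  -- The identity from `(ℝ^d, nn)` to `(ℝ^d, ‖·‖)` is linear on a finite-dimensional normed
  -- space, hence bounded.
  let NG : NormedAddCommGroup (Fin d → ℝ) := @NormedAddCommGroup.ofCore ℝ _ _ _ _ nI core
  let NS : @NormedSpace ℝ (Fin d → ℝ) _ NG.toSeminormedAddCommGroup :=
    @NormedSpace.ofCore ℝ (Fin d → ℝ) _ NG.toSeminormedAddCommGroup _ core
  have key : ∀ (E F : Type) [NormedAddCommGroup E] [NormedSpace ℝ E] [NormedAddCommGroup F]
      [NormedSpace ℝ F] [FiniteDimensional ℝ E] (f : E →ₗ[ℝ] F),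
      ∃ C : ℝ, 0 < C ∧ ∀ x, ‖f x‖ ≤ C * ‖x‖ := by
    intro E F _ _ _ _ _ f
    exact (LinearMap.toContinuousLinearMap f).bound
  have hfd : @FiniteDimensional ℝ (Fin d → ℝ) _ _ NS.toModule :=
    (inferInstance : FiniteDimensional ℝ (Fin d → ℝ))
  exact @key (Fin d → ℝ) (Fin d → ℝ) NG NS Pi.normedAddCommGroup Pi.normedSpace hfd
    (LinearMap.id : (Fin d → ℝ) →ₗ[ℝ] (Fin d → ℝ))

lemma add_sub_abs_sub_eq_two_mul_min (a b : ℝ) : a + b - |a - b| = 2 * min a b := by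
  rcases le_total a b with h | h
  · rw [abs_of_nonpos (by linarith), min_eq_left h]; ring
  · rw [abs_of_nonneg (by linarith), min_eq_right h]; ring

/-- Shifts bounded by `R` keep the total variation mass `∫ |q(z - u) - q z|` uniformly below `2`. -/
lemma exists_uniform_overlap (d : ℕ) (q : (Fin d → ℝ) → ℝ)
    (hqc : Continuous q) (hqpos : ∀ z, 0 < q z) (hqi : Integrable q) (hqint : ∫ z, q z = 1)
    (R : ℝ) :
    ∃ η : ℝ, 0 < η ∧ ∀ u, ‖u‖ ≤ R → ∫ z, |q (z - u) - q z| ≤ 2 - η := by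
  by_cases hR : 0 ≤ R
  swap
  · exact ⟨1, one_pos, fun u hu => absurd ((norm_nonneg u).trans hu) hR⟩
  obtain ⟨x₀, -, hx₀⟩ := (isCompact_closedBall (0 : Fin d → ℝ) (R + 1)).exists_isMinOn
    ⟨0, by simp; linarith⟩ hqc.continuousOn
  set B := Metric.closedBall (0 : Fin d → ℝ) 1 with hB
  have hBpos : 0 < volume.real B :=
    ENNReal.toReal_pos (Metric.measure_closedBall_pos volume _ one_pos).ne'
      (isCompact_closedBall _ _).measure_lt_top.ne
  refine ⟨2 * (q x₀ * volume.real B), by have := hqpos x₀; positivity, fun u hu => ?_⟩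
  have hqu : Integrable (fun z => q (z - u)) := hqi.comp_sub_right u
  have hmin : Integrable (fun z => min (q (z - u)) (q z)) := hqu.inf hqi
  have hlow : q x₀ * volume.real B ≤ ∫ z, min (q (z - u)) (q z) := by
    calc q x₀ * volume.real B = ∫ z in B, q x₀ := by
          rw [setIntegral_const, smul_eq_mul, mul_comm]
      _ ≤ ∫ z in B, min (q (z - u)) (q z) := by
          refine setIntegral_mono_on (integrableOn_const (isCompact_closedBall _ _).measure_lt_top.ne)
            hmin.integrableOn Metric.isClosed_closedBall.measurableSet fun z hz => ?_
          have hz1 : ‖z‖ ≤ 1 := by simpa [hB] using hz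
          refine le_min (hx₀ ?_) (hx₀ ?_)
          · rw [mem_closedBall_zero_iff]
            linarith [norm_sub_le z u]
          · rw [mem_closedBall_zero_iff]
            linarith
      _ ≤ ∫ z, min (q (z - u)) (q z) :=
          setIntegral_le_integral hmin
            (Filter.Eventually.of_forall fun z => le_min (hqpos _).le (hqpos _).le)
  have hrew : ∀ z, |q (z - u) - q z| = q (z - u) + q z - 2 * min (q (z - u)) (q z) := fun z => by
    linarith [add_sub_abs_sub_eq_two_mul_min (q (z - u)) (q z)]
  have hshift : ∫ z, q (z - u) = 1 := by rw [integral_sub_right_eq_self q u, hqint]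
  simp_rw [hrew]
  have hadd : Integrable (fun z => q (z - u) + q z) := hqu.add hqi
  rw [integral_sub hadd (hmin.const_mul 2), integral_add hqu hqi, integral_const_mul,
    hshift, hqint]
  linarith

/-- The functional-autoregressive example: for the chain `X_{k+1} = g(X_k) + Z_k` on `ℝ^d`
with `g` Lipschitz (for a norm `nn`) with constant `L < 1` and i.i.d. noise with continuous,
everywhere positive density `q`, every set `C̄(δ) = {(x,x') : nn(x - x') ≤ δ}` is a
`(1, ε(δ))`-coupling set, with `ε(δ)` and `ν_{x,x'}` as in (23). -/
theorem coupling_set_autoregressive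
    (d : ℕ) (g : (Fin d → ℝ) → (Fin d → ℝ)) (q : (Fin d → ℝ) → ℝ)
    -- `nn` is a norm on ℝ^d
    (nn : (Fin d → ℝ) → ℝ)
    (hnn0 : ∀ x, nn x = 0 ↔ x = 0)
    (hnnadd : ∀ x y, nn (x + y) ≤ nn x + nn y)
    (hnnsmul : ∀ (a : ℝ) x, nn (a • x) = |a| * nn x)
    -- `g` is Lipschitz with constant `L < 1`
    (L : ℝ) (hL0 : 0 ≤ L) (hL1 : L < 1)
    (hLip : ∀ x y, nn (g x - g y) ≤ L * nn (x - y))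
    -- `q` is a continuous, everywhere positive probability density
    (hqc : Continuous q) (hqpos : ∀ z, 0 < q z) (hqint : ∫ z, q z = 1)
    (δ : ℝ) (hδ : 0 < δ) :
    -- ε(δ) > 0
    0 < 1 - (1 / 2) * sSup {r : ℝ | ∃ p : (Fin d → ℝ) × (Fin d → ℝ),
        nn (p.1 - p.2) ≤ δ ∧ r = ∫ z, |q (z - (g p.1 - g p.2)) - q z|} ∧
    -- the measures ν_{x,x'} of (23) are probability measures on C̄(δ)
    (∀ p : (Fin d → ℝ) × (Fin d → ℝ), nn (p.1 - p.2) ≤ δ →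
      (∫ z, (q (z - g p.1) + q (z - g p.2) - |q (z - g p.1) - q (z - g p.2)|)) /
        (2 - ∫ z, |q (z - g p.1) - q (z - g p.2)|) = 1) ∧
    -- minorization: P(x,A) ∧ P(x',A) ≥ ε(δ) ν_{x,x'}(A) for (x,x') ∈ C̄(δ)
    (∀ p : (Fin d → ℝ) × (Fin d → ℝ), nn (p.1 - p.2) ≤ δ →
      ∀ A : Set (Fin d → ℝ), MeasurableSet A →
        (1 - (1 / 2) * sSup {r : ℝ | ∃ p' : (Fin d → ℝ) × (Fin d → ℝ),
            nn (p'.1 - p'.2) ≤ δ ∧ r = ∫ z, |q (z - (g p'.1 - g p'.2)) - q z|}) *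
          ((∫ z in A, (q (z - g p.1) + q (z - g p.2) - |q (z - g p.1) - q (z - g p.2)|)) /
            (2 - ∫ z, |q (z - g p.1) - q (z - g p.2)|)) ≤
        min (∫ y in A, q (y - g p.1)) (∫ y in A, q (y - g p.2))) := by
  have hqi : Integrable q := by
    by_contra h
    rw [integral_undef h] at hqint
    exact zero_ne_one hqint
  obtain ⟨C, hC, hbound⟩ := exists_bound_of_norm d nn hnn0 hnnadd hnnsmul
  obtain ⟨η, hη, hover⟩ := exists_uniform_overlap d q hqc hqpos hqi hqint (C * δ)
  set T := {r : ℝ | ∃ p : (Fin d → ℝ) × (Fin d → ℝ),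
        nn (p.1 - p.2) ≤ δ ∧ r = ∫ z, |q (z - (g p.1 - g p.2)) - q z|} with hT
  have hTle : ∀ r ∈ T, r ≤ 2 - η := by
    rintro r ⟨p, hp, rfl⟩
    refine hover _ ((hbound _).trans (mul_le_mul_of_nonneg_left ?_ hC.le))
    calc nn (g p.1 - g p.2) ≤ L * nn (p.1 - p.2) := hLip _ _
      _ ≤ L * δ := mul_le_mul_of_nonneg_left hp hL0
      _ ≤ δ := by nlinarith
  have hTne : T.Nonempty := ⟨_, (0, 0), by simpa [(hnn0 0).2 rfl] using hδ.le, rfl⟩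
  have hSle : sSup T ≤ 2 - η := csSup_le hTne hTle
  have hI : ∀ p : (Fin d → ℝ) × (Fin d → ℝ), nn (p.1 - p.2) ≤ δ →
      ∫ z, |q (z - g p.1) - q (z - g p.2)| ≤ sSup T := by
    intro p hp
    refine le_csSup ⟨2 - η, hTle⟩ ⟨p, hp, ?_⟩
    rw [← integral_sub_right_eq_self (fun z => |q (z - (g p.1 - g p.2)) - q z|) (g p.2)]
    simp only [sub_sub, add_sub_cancel]
  have hqs : ∀ a, Integrable (fun z => q (z - a)) := fun a => hqi.comp_sub_right a
  refine ⟨by linarith, fun p hp => ?_, fun p hp A hA => ?_⟩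
  · have hIp := hI p hp
    have habs : Integrable (fun z => |q (z - g p.1) - q (z - g p.2)|) :=
      ((hqs _).sub (hqs _)).abs
    have hadd : Integrable (fun z => q (z - g p.1) + q (z - g p.2)) := (hqs _).add (hqs _)
    rw [integral_sub hadd habs, integral_add (hqs _) (hqs _),
      integral_sub_right_eq_self q (g p.1), integral_sub_right_eq_self q (g p.2), hqint,
      one_add_one_eq_two]
    exact div_self (by linarith)
  · have hIp := hI p hp
    set I := ∫ z, |q (z - g p.1) - q (z - g p.2)|
    have hmin : Integrable (fun z => min (q (z - g p.1)) (q (z - g p.2))) := (hqs _).inf (hqs _)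
    simp_rw [add_sub_abs_sub_eq_two_mul_min]
    rw [integral_const_mul]
    have hM0 : 0 ≤ ∫ z in A, min (q (z - g p.1)) (q (z - g p.2)) :=
      integral_nonneg fun z => le_min (hqpos _).le (hqpos _).le
    have hM1 : ∫ z in A, min (q (z - g p.1)) (q (z - g p.2)) ≤ ∫ y in A, q (y - g p.1) :=
      integral_mono hmin.integrableOn (hqs _).integrableOn fun z => min_le_left _ _
    have hM2 : ∫ z in A, min (q (z - g p.1)) (q (z - g p.2)) ≤ ∫ y in A, q (y - g p.2) :=
      integral_mono hmin.integrableOn (hqs _).integrableOn fun z => min_le_right _ _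
    refine le_trans ?_ (le_min hM1 hM2)
    rw [← mul_div_assoc, div_le_iff₀ (by linarith)]
    nlinarith
end

section
/- For all λ with ‖g‖_Lip < λ < 1, all δ > (1−λ)/(λ − ‖g‖_Lip), all n ≥ 1, all j ∈ {1, …, n+1}, and all probability measures ξ, ξ' on ℝ^d: ‖ξP^n − ξ'P^n‖_TV ≤ 2(1−ε(δ))^j 1(j ≤ n) + 2 λ^n B^{j−1} (1 + ∫∫ ξ(dx) ξ'(dx') ‖x − x'‖), where B = max(1, λ^{-1}(1 + ‖g‖_Lip δ − ε(δ))). -/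
/-!
The proof is the dual, function-space form of a coupling argument. Write `T f x = ∫ f dP(x)` and
`e = 1 - ε(δ)`. If `|f x - f y| ≤ a + b ‖x - y‖`, then the inf-convolution of `f` with `b ‖·‖`
(`exists_lip_approx`) splits `f` into a `b`-Lipschitz function plus a remainder bounded by `a / 2`.
Translating the noise in the Lipschitz part and comparing densities in the remainder gives
(`step_bound`)

  `|T f x - T f x'| ≤ (a / 2) ∫ |q (z - (g x - g x')) - q z| dz + b L ‖x - x'‖`,

where the integral is at most `2 e` if `‖x - x'‖ ≤ δ`, and at most `2` in general. This plays the
role of a coupling which is at the same time maximal for total variation and contracting in mean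
for the norm.

For `|φ| ≤ 1`, an induction on `n` (`iterate_bound`) then shows, for every `j ≥ 1`,
`|Tⁿ φ x - Tⁿ φ x'| ≤ 2 e ^ j 1(j ≤ n) + 2 λ ^ n B ^ (j - 1) (1 + ‖x - x'‖)`. When
`‖x - x'‖ ≤ δ` the hypothesis is used at `j - 1`, together with `e + L δ ≤ λ B` (for `j = 1` the
bound `|Tⁿ φ| ≤ 1` suffices); otherwise it is used at `j`, together with `1 + L ‖x - x'‖ ≤ λ (1 + ‖x - x'‖)`. Integrating the pointwise bound
against `ξ ⊗ ξ'` concludes.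
-/

open MeasureTheory ProbabilityTheory Set
open scoped ENNReal

/-! ### Norms on `ℝ^d` and Lipschitz approximation -/

section Norm

variable {d : ℕ} {nn : (Fin d → ℝ) → ℝ}

lemma nn_nonneg (hnn0 : ∀ x, nn x = 0 ↔ x = 0) (hnnadd : ∀ x y, nn (x + y) ≤ nn x + nn y)
    (hnnsmul : ∀ (a : ℝ) x, nn (a • x) = |a| * nn x) (x : Fin d → ℝ) : 0 ≤ nn x := by
  have h1 := hnnadd x ((-1 : ℝ) • x)
  rw [hnnsmul] at h1
  have h2 : x + (-1 : ℝ) • x = 0 := by simp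
  rw [h2, (hnn0 0).2 rfl] at h1
  simp at h1
  linarith

lemma nn_sub_comm (hnnsmul : ∀ (a : ℝ) x, nn (a • x) = |a| * nn x) (x y : Fin d → ℝ) :
    nn (x - y) = nn (y - x) := by
  have h := hnnsmul (-1) (y - x)
  simpa using h

lemma nn_tri (hnnadd : ∀ x y, nn (x + y) ≤ nn x + nn y) (x y z : Fin d → ℝ) :
    nn (x - z) ≤ nn (x - y) + nn (y - z) := by
  have h := hnnadd (x - y) (y - z)
  rwa [sub_add_sub_cancel] at h

lemma nn_continuous (hnnadd : ∀ x y, nn (x + y) ≤ nn x + nn y)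
    (hnnsmul : ∀ (a : ℝ) x, nn (a • x) = |a| * nn x) : Continuous nn := by
  -- a seminorm on a finite-dimensional space is continuous
  let p : Seminorm ℝ (Fin d → ℝ) := Seminorm.of nn hnnadd (by simpa using hnnsmul)
  have hp : Continuous p := by
    have hc : ConvexOn ℝ Set.univ p := p.convexOn
    exact continuousOn_univ.1 (hc.continuousOn isOpen_univ)
  exact hp

/-- A function with `|F x - F y| ≤ b ‖x - y‖` is continuous for the usual topology. -/
lemma continuous_of_nn_lip (hnn0 : ∀ x, nn x = 0 ↔ x = 0)
    (hnnadd : ∀ x y, nn (x + y) ≤ nn x + nn y)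
    (hnnsmul : ∀ (a : ℝ) x, nn (a • x) = |a| * nn x) {F : (Fin d → ℝ) → ℝ} {b : ℝ}
    (hF : ∀ x y, |F x - F y| ≤ b * nn (x - y)) : Continuous F := by
  have hc := nn_continuous hnnadd hnnsmul
  rw [continuous_iff_continuousAt]
  intro x
  have h1 : Filter.Tendsto (fun y => b * nn (y - x)) (nhds x) (nhds 0) := by
    have h2 : Continuous (fun y => b * nn (y - x)) := by fun_prop
    have h3 := h2.tendsto x
    simpa [(hnn0 0).2 rfl] using h3
  refine tendsto_iff_dist_tendsto_zero.2 ?_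
  refine squeeze_zero (fun _ => dist_nonneg) (fun y => ?_) h1
  rw [Real.dist_eq]
  exact hF y x

/-- A function with modulus of continuity `a + b ‖x - y‖` is within `a / 2` of a `b`-Lipschitz
function, namely its inf-convolution with `b ‖·‖` shifted up by `a / 2`. -/
lemma exists_lip_approx (hnn0 : ∀ x, nn x = 0 ↔ x = 0)
    (hnnadd : ∀ x y, nn (x + y) ≤ nn x + nn y)
    (hnnsmul : ∀ (a : ℝ) x, nn (a • x) = |a| * nn x) {f : (Fin d → ℝ) → ℝ} {a b : ℝ}
    (hb : 0 ≤ b) (hf1 : ∀ x, |f x| ≤ 1)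
    (hf : ∀ x y, |f x - f y| ≤ a + b * nn (x - y)) :
    ∃ h : (Fin d → ℝ) → ℝ, (∀ x y, |h x - h y| ≤ b * nn (x - y)) ∧
      ∀ x, |f x - h x| ≤ a / 2 := by
  have hpos := nn_nonneg hnn0 hnnadd hnnsmul
  have hbdd : ∀ x, BddBelow (Set.range fun y => f y + b * nn (x - y)) := by
    intro x
    refine ⟨-1, ?_⟩
    rintro _ ⟨y, rfl⟩
    have h1 := (abs_le.1 (hf1 y)).1
    have h2 := mul_nonneg hb (hpos (x - y))
    dsimp only
    linarith
  have hlip : ∀ x x', (⨅ y, f y + b * nn (x - y)) - b * nn (x - x') ≤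
      ⨅ y, f y + b * nn (x' - y) := by
    intro x x'
    refine le_ciInf fun y => ?_
    have h1 := ciInf_le (hbdd x) y
    have h2 := mul_le_mul_of_nonneg_left (nn_tri hnnadd x x' y) hb
    linarith
  refine ⟨fun x => (⨅ y, f y + b * nn (x - y)) + a / 2, fun x x' => ?_, fun x => ?_⟩
  · have h1 := hlip x x'
    have h2 := hlip x' x
    rw [nn_sub_comm hnnsmul x' x] at h2
    rw [abs_le]
    constructor <;> linarith
  · have h1 : (⨅ y, f y + b * nn (x - y)) ≤ f x := by
      have h3 := ciInf_le (hbdd x) x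
      simpa [(hnn0 0).2 rfl] using h3
    have h2 : f x - a ≤ ⨅ y, f y + b * nn (x - y) := by
      refine le_ciInf fun y => ?_
      have h3 := (abs_le.1 (hf x y)).2
      linarith
    rw [abs_le]
    constructor <;> linarith

end Norm

/-! ### One step of the autoregressive kernel -/

section Kernel

variable {d : ℕ} {g : (Fin d → ℝ) → (Fin d → ℝ)} {q : (Fin d → ℝ) → ℝ}
  {P : Kernel (Fin d → ℝ) (Fin d → ℝ)}

lemma q_integrable (hqint : ∫ z, q z = 1) : Integrable q := by
  by_contra h
  rw [integral_undef h] at hqint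
  exact zero_ne_one hqint

lemma integral_P (hqc : Continuous q) (hqpos : ∀ z, 0 < q z)
    (hP : ∀ x A, MeasurableSet A → P x A = ∫⁻ y in A, ENNReal.ofReal (q (y - g x)))
    (f : (Fin d → ℝ) → ℝ) (x : Fin d → ℝ) :
    ∫ y, f y ∂(P x) = ∫ y, q (y - g x) * f y := by
  have hm : Measurable fun y => ENNReal.ofReal (q (y - g x)) := by
    have : Continuous fun y => q (y - g x) := by fun_prop
    exact this.measurable.ennreal_ofReal
  have h1 : P x = volume.withDensity fun y => ENNReal.ofReal (q (y - g x)) := by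
    ext A hA
    rw [hP x A hA, withDensity_apply _ hA]
  rw [h1, integral_withDensity_eq_integral_toReal_smul hm (by simp)]
  congr 1
  ext y
  rw [ENNReal.toReal_ofReal (hqpos _).le, smul_eq_mul]

lemma integral_shift_diff (u v : Fin d → ℝ) :
    ∫ y, |q (y - u) - q (y - v)| = ∫ z, |q (z - (u - v)) - q z| := by
  rw [← integral_add_right_eq_self (fun y => |q (y - u) - q (y - v)|) v]
  congr 1
  ext z
  congr 3
  · abel_nf
  · abel_nf

lemma integral_shift_diff_le (hqpos : ∀ z, 0 < q z) (hqint : ∫ z, q z = 1) (w : Fin d → ℝ) :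
    ∫ z, |q (z - w) - q z| ≤ 2 := by
  have hi := q_integrable hqint
  have h1 : ∫ z, |q (z - w) - q z| ≤ ∫ z, (q (z - w) + q z) := by
    refine integral_mono ((hi.comp_sub_right w).sub hi).abs ((hi.comp_sub_right w).add hi) ?_
    intro z
    have h2 := hqpos (z - w)
    have h3 := hqpos z
    dsimp only
    rw [abs_le]
    constructor <;> linarith
  rw [integral_add (hi.comp_sub_right w) hi, integral_sub_right_eq_self q w, hqint] at h1
  linarith

/-- One-step smoothing: the Lipschitz part of `f` contracts by the factor `L`, the bounded part is
controlled by the total variation distance between the two transition densities. -/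
lemma step_bound {nn : (Fin d → ℝ) → ℝ} (hnn0 : ∀ x, nn x = 0 ↔ x = 0)
    (hnnadd : ∀ x y, nn (x + y) ≤ nn x + nn y)
    (hnnsmul : ∀ (a : ℝ) x, nn (a • x) = |a| * nn x)
    {L : ℝ} (hLip : ∀ x y, nn (g x - g y) ≤ L * nn (x - y))
    (hqc : Continuous q) (hqpos : ∀ z, 0 < q z) (hqint : ∫ z, q z = 1)
    (hP : ∀ x A, MeasurableSet A → P x A = ∫⁻ y in A, ENNReal.ofReal (q (y - g x)))
    {f : (Fin d → ℝ) → ℝ} (hfm : Measurable f) {a b : ℝ}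
    (hb : 0 ≤ b) (hf1 : ∀ x, |f x| ≤ 1)
    (hf : ∀ x y, |f x - f y| ≤ a + b * nn (x - y)) (x x' : Fin d → ℝ) :
    |∫ y, f y ∂(P x) - ∫ y, f y ∂(P x')| ≤
      a / 2 * (∫ z, |q (z - (g x - g x')) - q z|) + b * (L * nn (x - x')) := by
  have hi := q_integrable hqint
  obtain ⟨h, hlip, happ⟩ := exists_lip_approx hnn0 hnnadd hnnsmul hb hf1 hf
  have hhc : Continuous h := continuous_of_nn_lip hnn0 hnnadd hnnsmul hlip
  have hhb : ∀ y, |h y| ≤ 1 + a / 2 := by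
    intro y
    have h1 := abs_le.1 (hf1 y)
    have h2 := abs_le.1 (happ y)
    rw [abs_le]
    constructor <;> linarith [h1.1, h1.2, h2.1, h2.2]
  have hint : ∀ (u : Fin d → ℝ) (F : (Fin d → ℝ) → ℝ) (C : ℝ), Measurable F →
      (∀ y, |F y| ≤ C) → Integrable (fun y => q (y - u) * F y) := by
    intro u F C hF hC
    exact (hi.comp_sub_right u).mul_bdd (c := C) hF.aestronglyMeasurable
      (Filter.Eventually.of_forall fun y => by simpa using hC y)
  have hrm : Measurable fun y => f y - h y := hfm.sub hhc.measurable
  have hsplit : ∀ u, ∫ y, q (y - u) * f y =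
      (∫ y, q (y - u) * (f y - h y)) + ∫ z, q z * h (z + u) := by
    intro u
    have e1 : ∫ z, q z * h (z + u) = ∫ y, q (y - u) * h y := by
      rw [← integral_add_right_eq_self (fun y => q (y - u) * h y) u]
      simp
    rw [e1, ← integral_add (hint u _ _ hrm happ) (hint u _ _ hhc.measurable hhb)]
    congr 1
    ext y
    ring
  have hint' : ∀ u, Integrable fun z => q z * h (z + u) := by
    intro u
    exact hi.mul_bdd (c := 1 + a / 2)
      (hhc.comp (continuous_add_const u)).aestronglyMeasurable
      (Filter.Eventually.of_forall fun y => by simpa using hhb _)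
  have hbdpart : |(∫ y, q (y - g x) * (f y - h y)) - ∫ y, q (y - g x') * (f y - h y)| ≤
      a / 2 * (∫ z, |q (z - (g x - g x')) - q z|) := by
    rw [← integral_sub (hint _ _ _ hrm happ) (hint _ _ _ hrm happ), ← integral_shift_diff,
      ← integral_const_mul]
    refine (abs_integral_le_integral_abs).trans ?_
    refine integral_mono ((hint _ _ _ hrm happ).sub (hint _ _ _ hrm happ)).abs
      ((((hi.comp_sub_right _).sub (hi.comp_sub_right _)).abs).const_mul _) ?_
    intro y
    dsimp only
    rw [← sub_mul, abs_mul, mul_comm]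
    exact mul_le_mul_of_nonneg_right (happ y) (abs_nonneg _)
  have hlippart : |(∫ z, q z * h (z + g x)) - ∫ z, q z * h (z + g x')| ≤
      b * (L * nn (x - x')) := by
    rw [← integral_sub (hint' _) (hint' _)]
    refine (abs_integral_le_integral_abs).trans ?_
    have h1 : ∫ z, |q z * h (z + g x) - q z * h (z + g x')| ≤
        ∫ z, q z * (b * (L * nn (x - x'))) := by
      refine integral_mono ((hint' _).sub (hint' _)).abs (hi.mul_const _) ?_
      intro z
      dsimp only
      rw [← mul_sub, abs_mul, abs_of_pos (hqpos z)]
      refine mul_le_mul_of_nonneg_left ?_ (hqpos z).le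
      refine (hlip _ _).trans ?_
      rw [add_sub_add_left_eq_sub]
      exact mul_le_mul_of_nonneg_left (hLip x x') hb
    rwa [integral_mul_const, hqint, one_mul] at h1
  rw [integral_P hqc hqpos hP, integral_P hqc hqpos hP, hsplit, hsplit]
  have h1 := abs_le.1 hbdpart
  have h2 := abs_le.1 hlippart
  rw [abs_le]
  constructor <;> linarith [h1.1, h1.2, h2.1, h2.2]

end Kernel

/-! ### Iterates of the Markov operator -/

section Operator

variable {X : Type*} [MeasurableSpace X]

/-- The Markov operator `f ↦ (x ↦ ∫ f dP(x))` on functions. -/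
noncomputable def markovOp (P : Kernel X X) (f : X → ℝ) : X → ℝ := fun x => ∫ y, f y ∂(P x)

lemma markovOp_measurable (P : Kernel X X) {f : X → ℝ} (hf : Measurable f) : Measurable (markovOp P f) :=
  (hf.stronglyMeasurable.integral_kernel (κ := P)).measurable

variable (P : Kernel X X) [IsMarkovKernel P]

lemma markovOp_bdd {f : X → ℝ} (hf : ∀ x, |f x| ≤ 1) (x : X) : |markovOp P f x| ≤ 1 := by
  have h := norm_integral_le_of_norm_le_const (μ := P x) (f := f) (C := 1)
    (Filter.Eventually.of_forall hf)
  simpa [markovOp] using h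

lemma markovOp_iterate_spec {f : X → ℝ} (hf : Measurable f) (hf1 : ∀ x, |f x| ≤ 1) (n : ℕ) :
    Measurable ((markovOp P)^[n] f) ∧ ∀ x, |(markovOp P)^[n] f x| ≤ 1 := by
  induction n with
  | zero => exact ⟨hf, hf1⟩
  | succ n ih =>
    rw [Function.iterate_succ_apply']
    exact ⟨markovOp_measurable P ih.1, markovOp_bdd P ih.2⟩

lemma iterMeas_prob (ξ : Measure X) [IsProbabilityMeasure ξ] (n : ℕ) :
    IsProbabilityMeasure (iterMeas P ξ n) := by
  induction n with
  | zero => assumption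
  | succ n ih =>
    have : IsProbabilityMeasure ((iterMeas P ξ n).bind P) := inferInstance
    exact this

lemma integral_iterMeas (ξ : Measure X) [IsProbabilityMeasure ξ] (n : ℕ) :
    ∀ f : X → ℝ, Measurable f → (∀ x, |f x| ≤ 1) →
      ∫ x, f x ∂(iterMeas P ξ n) = ∫ x, (markovOp P)^[n] f x ∂ξ := by
  induction n with
  | zero => intro f _ _; rfl
  | succ n ih =>
    intro f hf hf1
    have := iterMeas_prob P ξ n
    have h2 : IsProbabilityMeasure ((iterMeas P ξ n).bind P) := inferInstance
    have hi : Integrable f ((iterMeas P ξ n).bind P) :=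
      Integrable.of_bound hf.aestronglyMeasurable 1 (Filter.Eventually.of_forall hf1)
    rw [Function.iterate_succ_apply, ← ih _ (markovOp_measurable P hf) (markovOp_bdd P hf1)]
    change ∫ x, f x ∂((iterMeas P ξ n).bind P) = _
    change Integrable f (P ∘ₘ iterMeas P ξ n) at hi
    rw [Measure.comp_eq_comp_const_apply] at hi ⊢
    rw [Kernel.integral_comp hi, Kernel.const_apply]
    rfl

end Operator

/-! ### The total variation bound -/

/-- Pointwise bound on `Tⁿ φ x - Tⁿ φ x'`. Here `e` stands for `1 - ε(δ)`, and `j + 1` is the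
index called `j` in the main theorem. It is not restricted to be at most `n + 1`, which keeps the
two cases of the induction uniform. -/
lemma iterate_bound {d : ℕ} {g : (Fin d → ℝ) → (Fin d → ℝ)} {q : (Fin d → ℝ) → ℝ}
    {P : Kernel (Fin d → ℝ) (Fin d → ℝ)} [IsMarkovKernel P]
    {nn : (Fin d → ℝ) → ℝ} (hnn0 : ∀ x, nn x = 0 ↔ x = 0)
    (hnnadd : ∀ x y, nn (x + y) ≤ nn x + nn y)
    (hnnsmul : ∀ (a : ℝ) x, nn (a • x) = |a| * nn x)
    {L : ℝ} (hL0 : 0 ≤ L) (hLip : ∀ x y, nn (g x - g y) ≤ L * nn (x - y))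
    (hqc : Continuous q) (hqpos : ∀ z, 0 < q z) (hqint : ∫ z, q z = 1)
    (hP : ∀ x A, MeasurableSet A → P x A = ∫⁻ y in A, ENNReal.ofReal (q (y - g x)))
    {lam δ e B : ℝ} (hlamL : L < lam) (hδ : (1 - lam) / (lam - L) < δ)
    (he0 : 0 ≤ e)
    (he : ∀ x x', nn (x - x') ≤ δ → (∫ z, |q (z - (g x - g x')) - q z|) ≤ 2 * e)
    (hB1 : 1 ≤ B) (hB : e + L * δ ≤ lam * B)
    {φ : (Fin d → ℝ) → ℝ} (hφ : Measurable φ) (hφ1 : ∀ x, |φ x| ≤ 1) (n : ℕ) :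
    ∀ (j : ℕ) (x x' : Fin d → ℝ),
      |(markovOp P)^[n] φ x - (markovOp P)^[n] φ x'| ≤
        (if j + 1 ≤ n then 2 * e ^ (j + 1) else 0) +
          2 * lam ^ n * B ^ j * (1 + nn (x - x')) := by
  have hpos := nn_nonneg hnn0 hnnadd hnnsmul
  have hlam0 : 0 < lam := hL0.trans_lt hlamL
  have hB0 : 0 ≤ B := zero_le_one.trans hB1
  induction n with
  | zero =>
    intro j x x'
    have h1 := abs_le.1 (hφ1 x)
    have h2 := abs_le.1 (hφ1 x')
    have h3 : 1 ≤ B ^ j := one_le_pow₀ hB1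
    have h4 : 2 ≤ 2 * B ^ j * (1 + nn (x - x')) := by nlinarith [hpos (x - x')]
    rw [if_neg (by omega)]
    simp only [Function.iterate_zero, id, pow_zero, mul_one, zero_add]
    rw [abs_le]
    constructor <;> linarith [h1.1, h1.2, h2.1, h2.2]
  | succ n ih =>
    intro j x x'
    obtain ⟨hm, hbd⟩ := markovOp_iterate_spec P hφ hφ1 n
    rw [Function.iterate_succ_apply']
    set f := (markovOp P)^[n] φ with hf
    have hstep := fun (a b : ℝ) (hb : 0 ≤ b)
        (hab : ∀ x y, |f x - f y| ≤ a + b * nn (x - y)) =>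
      (step_bound hnn0 hnnadd hnnsmul hLip hqc hqpos hqint hP hm hb hbd hab x x')
    have hN := hpos (x - x')
    have hK : ∀ k, 0 ≤ 2 * lam ^ n * B ^ k := fun k => by positivity
    -- the induction hypothesis at `k`, as a modulus of continuity `a + b ‖x - y‖`
    have hmod : ∀ k, ∀ x y, |f x - f y| ≤
        ((if k + 1 ≤ n then 2 * e ^ (k + 1) else 0) + 2 * lam ^ n * B ^ k) +
          2 * lam ^ n * B ^ k * nn (x - y) := by
      intro k x y
      refine (ih k x y).trans (le_of_eq ?_)
      ring
    change |∫ y, f y ∂(P x) - ∫ y, f y ∂(P x')| ≤ _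
    by_cases hC : nn (x - x') ≤ δ
    · have hS := he x x' hC
      cases j with
      | zero =>
        -- here `f` need only have oscillation at most `2`
        have h1 := hstep 2 0 le_rfl (fun x y => by
          have h1 := abs_le.1 (hbd x)
          have h2 := abs_le.1 (hbd y)
          rw [abs_le]
          constructor <;> linarith [h1.1, h1.2, h2.1, h2.2])
        have h2 : 0 ≤ 2 * lam ^ (n + 1) * B ^ 0 * (1 + nn (x - x')) := by positivity
        rw [if_pos (by omega)]
        simp only [zero_add, pow_one]
        linarith
      | succ k =>
        have h1 := hstep _ _ (hK k) (hmod k)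
        set A : ℝ := if k + 1 ≤ n then 2 * e ^ (k + 1) else 0 with hA
        have hA0 : 0 ≤ A := by
          rw [hA]; split_ifs <;> positivity
        have hA' : (if k + 1 + 1 ≤ n + 1 then 2 * e ^ (k + 1 + 1) else 0) = e * A := by
          rw [hA]
          by_cases h : k + 1 ≤ n
          · rw [if_pos h, if_pos (by omega)]; ring
          · rw [if_neg h, if_neg (by omega)]; ring
        rw [hA']
        have h2 : (A + 2 * lam ^ n * B ^ k) / 2 * (∫ z, |q (z - (g x - g x')) - q z|) ≤
            (A + 2 * lam ^ n * B ^ k) / 2 * (2 * e) :=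
          mul_le_mul_of_nonneg_left hS (by linarith [hK k])
        have h3 : e + L * nn (x - x') ≤ lam * B * (1 + nn (x - x')) := by
          have h4 := mul_le_mul_of_nonneg_left hC hL0
          have h5 : 0 ≤ lam * B * nn (x - x') := by positivity
          linarith
        have h6 := mul_le_mul_of_nonneg_left h3 (hK k)
        have h7 : 2 * lam ^ (n + 1) * B ^ (k + 1) * (1 + nn (x - x')) =
            2 * lam ^ n * B ^ k * (lam * B * (1 + nn (x - x'))) := by ring
        rw [h7]
        linarith
    · have h1 := hstep _ _ (hK j) (hmod j)
      have hS := integral_shift_diff_le hqpos hqint (g x - g x')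
      set A : ℝ := if j + 1 ≤ n then 2 * e ^ (j + 1) else 0 with hA
      have hA0 : 0 ≤ A := by
        rw [hA]; split_ifs <;> positivity
      have hA' : A ≤ (if j + 1 ≤ n + 1 then 2 * e ^ (j + 1) else 0) := by
        rw [hA]
        by_cases h : j + 1 ≤ n
        · rw [if_pos h, if_pos (by omega)]
        · rw [if_neg h]; split_ifs <;> positivity
      have h2 : (A + 2 * lam ^ n * B ^ j) / 2 * (∫ z, |q (z - (g x - g x')) - q z|) ≤
          (A + 2 * lam ^ n * B ^ j) / 2 * 2 :=
        mul_le_mul_of_nonneg_left hS (by linarith [hK j])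
      have h3 : 1 + L * nn (x - x') ≤ lam * (1 + nn (x - x')) := by
        have h4 := (div_lt_iff₀ (sub_pos.2 hlamL)).1 (hδ.trans (not_le.1 hC))
        linarith
      have h6 := mul_le_mul_of_nonneg_left h3 (hK j)
      have h7 : 2 * lam ^ (n + 1) * B ^ j * (1 + nn (x - x')) =
          2 * lam ^ n * B ^ j * (lam * (1 + nn (x - x'))) := by ring
      rw [h7]
      linarith

/-- Proposition 6: explicit total variation bound for the functional-autoregressive chain
`X_{k+1} = g(X_k) + Z_k`, with `ε(δ)` as in (23) and
`B = max(1, λ⁻¹(1 + ‖g‖_Lip δ - ε(δ)))`. -/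
theorem total_variation_bound_autoregressive
    (d : ℕ) (g : (Fin d → ℝ) → (Fin d → ℝ)) (q : (Fin d → ℝ) → ℝ)
    -- `nn` is a norm on ℝ^d
    (nn : (Fin d → ℝ) → ℝ)
    (hnn0 : ∀ x, nn x = 0 ↔ x = 0)
    (hnnadd : ∀ x y, nn (x + y) ≤ nn x + nn y)
    (hnnsmul : ∀ (a : ℝ) x, nn (a • x) = |a| * nn x)
    -- `g` is Lipschitz with constant `L = ‖g‖_Lip < 1`
    (L : ℝ) (hL0 : 0 ≤ L) (hL1 : L < 1)
    (hLip : ∀ x y, nn (g x - g y) ≤ L * nn (x - y))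
    -- `q` is a continuous, everywhere positive probability density
    (hqc : Continuous q) (hqpos : ∀ z, 0 < q z) (hqint : ∫ z, q z = 1)
    -- the transition kernel `P(x, A) = ∫_A q(y - g(x)) dy`
    (P : Kernel (Fin d → ℝ) (Fin d → ℝ)) [IsMarkovKernel P]
    (hP : ∀ x A, MeasurableSet A → P x A = ∫⁻ y in A, ENNReal.ofReal (q (y - g x)))
    (lam : ℝ) (hlamL : L < lam) (hlam1 : lam < 1)
    (δ : ℝ) (hδ : (1 - lam) / (lam - L) < δ)
    (n j : ℕ) (hn : 1 ≤ n) (hj1 : 1 ≤ j) (hj2 : j ≤ n + 1)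
    (ξ ξ' : Measure (Fin d → ℝ)) [IsProbabilityMeasure ξ] [IsProbabilityMeasure ξ'] :
    fDist (fun _ => 1) (iterMeas P ξ n) (iterMeas P ξ' n) ≤
      (if j ≤ n then
        ENNReal.ofReal (2 * (1 - (1 - (1 / 2) * sSup {r : ℝ |
          ∃ p : (Fin d → ℝ) × (Fin d → ℝ), nn (p.1 - p.2) ≤ δ ∧
            r = ∫ z, |q (z - (g p.1 - g p.2)) - q z|})) ^ j)
      else 0) +
        ENNReal.ofReal (2 * lam ^ n) *
          (max 1 (ENNReal.ofReal (lam⁻¹ * (1 + L * δ -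
            (1 - (1 / 2) * sSup {r : ℝ | ∃ p : (Fin d → ℝ) × (Fin d → ℝ),
              nn (p.1 - p.2) ≤ δ ∧ r = ∫ z, |q (z - (g p.1 - g p.2)) - q z|}))))) ^ (j - 1) *
          (1 + ∫⁻ p, ENNReal.ofReal (nn (p.1 - p.2)) ∂(ξ.prod ξ')) := by
  have hpos := nn_nonneg hnn0 hnnadd hnnsmul
  have hlam0 : 0 < lam := hL0.trans_lt hlamL
  set S : ℝ := sSup {r : ℝ | ∃ p : (Fin d → ℝ) × (Fin d → ℝ),
    nn (p.1 - p.2) ≤ δ ∧ r = ∫ z, |q (z - (g p.1 - g p.2)) - q z|} with hS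
  obtain ⟨j, rfl⟩ : ∃ k, j = k + 1 := ⟨j - 1, by omega⟩
  set e : ℝ := 1 - (1 - (1 / 2) * S) with he
  have hS0 : 0 ≤ S := by
    refine Real.sSup_nonneg ?_
    rintro r ⟨p, -, rfl⟩
    exact integral_nonneg fun z => abs_nonneg _
  have he0 : 0 ≤ e := by rw [he]; linarith
  -- the supremum defining `ε(δ)` is over a bounded set
  have heS : ∀ x x', nn (x - x') ≤ δ → (∫ z, |q (z - (g x - g x')) - q z|) ≤ 2 * e := by
    intro x x' hx
    have h1 : (∫ z, |q (z - (g x - g x')) - q z|) ≤ S := by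
      refine le_csSup ⟨2, ?_⟩ ⟨(x, x'), hx, rfl⟩
      rintro r ⟨p, -, rfl⟩
      exact integral_shift_diff_le hqpos hqint _
    rw [he]
    linarith
  set B : ℝ := max 1 (lam⁻¹ * (1 + L * δ - (1 - (1 / 2) * S))) with hBdef
  have hB1 : 1 ≤ B := le_max_left _ _
  have hB : e + L * δ ≤ lam * B := by
    have h1 : lam⁻¹ * (1 + L * δ - (1 - (1 / 2) * S)) ≤ B := le_max_right _ _
    have h2 := mul_le_mul_of_nonneg_left h1 hlam0.le
    rw [mul_inv_cancel_left₀ hlam0.ne'] at h2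
    rw [he]
    linarith
  have hBe : max 1 (ENNReal.ofReal (lam⁻¹ * (1 + L * δ - (1 - (1 / 2) * S)))) =
      ENNReal.ofReal B := by
    rw [hBdef, ENNReal.ofReal_max, ENNReal.ofReal_one]
  rw [hBe, Nat.add_sub_cancel]
  refine iSup_le fun φ => iSup_le fun hφ => iSup_le fun hφ1 => iSup_le fun _ => iSup_le fun _ => ?_
  rw [integral_iterMeas P ξ n φ hφ hφ1, integral_iterMeas P ξ' n φ hφ hφ1]
  obtain ⟨hFm, hF1⟩ := markovOp_iterate_spec P hφ hφ1 n
  have hbound := iterate_bound hnn0 hnnadd hnnsmul hL0 hLip hqc hqpos hqint hP hlamL hδ he0 heS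
    hB1 hB hφ hφ1 n j
  set F := (markovOp P)^[n] φ
  have hFi : ∀ (μ : Measure (Fin d → ℝ)) [IsProbabilityMeasure μ], Integrable F μ := fun μ _ =>
    Integrable.of_bound hFm.aestronglyMeasurable 1 (Filter.Eventually.of_forall hF1)
  have hdiff : ∫ x, F x ∂ξ - ∫ x, F x ∂ξ' = ∫ p, (F p.1 - F p.2) ∂(ξ.prod ξ') := by
    rw [integral_sub ((hFi ξ).comp_fst ξ') ((hFi ξ').comp_snd ξ), integral_fun_fst,
      integral_fun_snd]
    simp
  rw [hdiff]
  have hnnm : Measurable fun p : (Fin d → ℝ) × (Fin d → ℝ) => ENNReal.ofReal (nn (p.1 - p.2)) := by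
    have hc := nn_continuous hnnadd hnnsmul
    have : Continuous fun p : (Fin d → ℝ) × (Fin d → ℝ) => nn (p.1 - p.2) := by fun_prop
    exact this.measurable.ennreal_ofReal
  calc ENNReal.ofReal |∫ p, (F p.1 - F p.2) ∂(ξ.prod ξ')|
      ≤ ∫⁻ p, ENNReal.ofReal |F p.1 - F p.2| ∂(ξ.prod ξ') := by
        rw [← Real.enorm_eq_ofReal_abs]
        refine (enorm_integral_le_lintegral_enorm _).trans (le_of_eq ?_)
        simp only [Real.enorm_eq_ofReal_abs]
    _ ≤ ∫⁻ p, ((if j + 1 ≤ n then ENNReal.ofReal (2 * e ^ (j + 1)) else 0) +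
          ENNReal.ofReal (2 * lam ^ n) * ENNReal.ofReal B ^ j *
            (1 + ENNReal.ofReal (nn (p.1 - p.2)))) ∂(ξ.prod ξ') := by
        refine lintegral_mono fun p => ?_
        refine (ENNReal.ofReal_le_ofReal (hbound p.1 p.2)).trans ?_
        refine ENNReal.ofReal_add_le.trans (add_le_add ?_ ?_)
        · split_ifs <;> simp
        · have hB0 : 0 ≤ B := zero_le_one.trans hB1
          rw [ENNReal.ofReal_mul (by positivity), ENNReal.ofReal_mul (by positivity),
            ENNReal.ofReal_pow hB0, ENNReal.ofReal_add zero_le_one (hpos _), ENNReal.ofReal_one]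
    _ = _ := by
        rw [lintegral_add_left measurable_const, lintegral_const_mul _ (hnnm.const_add 1),
          lintegral_add_left measurable_const]
        simp
end

section
/- Assume (NS1) and let f : X → [1,∞) be measurable. Then for any probability measures ξ, ξ' on X and any n ≥ 1, ‖ξP_1⋯P_n − ξ'P_1⋯P_n‖_f ≤ E*_{ξ⊗ξ'}[(f(X_n) + f(X'_n)) Π_{i=1}^{n} (1 − ε_i 1_{C̄_i}(X̄_{i−1}))], where X̄_i = (X_i, X'_i). -/
/-!
The proof avoids constructing the coupled chain. Call `W` a *coupling bound* for a pair of functions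
`a b : X → ℝ≥0∞` if `a x + b x' ≤ b x + a x' + W (x, x')` for all `x, x'`; this is the
subtraction-free form of `(a - b) x - (a - b) x' ≤ W (x, x')`. One step of the chain preserves it
(`coupling_step`, from `split_coupling_le`): if `W` is a coupling bound for `(a, b)`, then
`p ↦ (1 - ε 1_C p) * ∫ W dP*(p)` is one for `(P a, P b)`. Outside `C` the inequality is integrated
against `P̄ p`, whose marginals are `P x` and `P x'`. Inside `C` it is integrated against `R̄ p` and
multiplied by `1 - ε`; the remaining part `ε ν(a + b)` is the same on both sides.

For `|φ| ≤ f` take `a = φ⁺` and `b = φ⁻`, for which `f x + f x'` is a coupling bound. Iterating the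
step produces exactly the iterated integrals defining the right-hand side (`kexpNH_weight_succ`), and
integrating the resulting pointwise inequality against `ξ ⊗ ξ'` gives the bound on
`∫ φ dξP₁⋯Pₙ - ∫ φ dξ'P₁⋯Pₙ`. Exchanging `a` and `b` gives the bound on its negative.
-/

open MeasureTheory ProbabilityTheory Set
open scoped ENNReal

/-- `iterMeasNH P ξ n = ξ P₁ ⋯ Pₙ` for the time-inhomogeneous chain with kernels `P k`. -/
noncomputable def iterMeasNH {X : Type*} [MeasurableSpace X] (P : ℕ → Kernel X X)
    (ξ : Measure X) : ℕ → Measure X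
  | 0 => ξ
  | n + 1 => (iterMeasNH P ξ n).bind (fun x => P (n + 1) x)

/-- Expectation `E_y[φ(X_k, …, X_{k+n})]` for the time-inhomogeneous Markov chain with kernels
`κ` (kernel `κ i` driving the step from time `i - 1` to time `i`), started at time `k` in `y`. -/
noncomputable def kexpNH {Y : Type*} [MeasurableSpace Y] (κ : ℕ → Kernel Y Y) :
    ℕ → (n : ℕ) → Y → ((Fin (n + 1) → Y) → ℝ≥0∞) → ℝ≥0∞
  | _, 0, y, φ => φ (fun _ => y)
  | k, n + 1, y, φ => ∫⁻ y', kexpNH κ (k + 1) n y' (fun v => φ (Fin.cons y v)) ∂(κ (k + 1) y)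

/-- Expectation `E_μ[φ(X₀,…,Xₙ)]` for the time-inhomogeneous Markov chain with kernels `κ`
and initial law `μ`. -/
noncomputable def chainExpNH {Y : Type*} [MeasurableSpace Y] (κ : ℕ → Kernel Y Y)
    (μ : Measure Y) (n : ℕ) (φ : (Fin (n + 1) → Y) → ℝ≥0∞) : ℝ≥0∞ :=
  ∫⁻ y, kexpNH κ 0 n y φ ∂μ

/-- The function `P_{k+1} ⋯ P_{k+n} g` of the state at time `k`. -/
noncomputable def backwardIter {X : Type*} [MeasurableSpace X] (P : ℕ → Kernel X X)
    (g : X → ℝ≥0∞) : ℕ → ℕ → X → ℝ≥0∞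
  | _, 0 => g
  | k, n + 1 => fun x => ∫⁻ y, backwardIter P g (k + 1) n y ∂(P (k + 1) x)

theorem measurable_backwardIter {X : Type*} [MeasurableSpace X] (P : ℕ → Kernel X X)
    {g : X → ℝ≥0∞} (hg : Measurable g) (n k : ℕ) : Measurable (backwardIter P g k n) := by
  induction n generalizing k with
  | zero => exact hg
  | succ n ih => exact (ih (k + 1)).lintegral_kernel

theorem lintegral_backwardIter {X : Type*} [MeasurableSpace X] (P : ℕ → Kernel X X)
    (ξ : Measure X) {g : X → ℝ≥0∞} (hg : Measurable g) (n k : ℕ) :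
    ∫⁻ x, backwardIter P g k n x ∂(iterMeasNH P ξ k) = ∫⁻ x, g x ∂(iterMeasNH P ξ (k + n)) := by
  induction n generalizing k with
  | zero => rfl
  | succ n ih =>
    have h := ih (k + 1)
    rw [show k + 1 + n = k + (n + 1) by omega] at h
    rw [← h]
    exact (Measure.lintegral_bind (P (k + 1)).measurable.aemeasurable
      (measurable_backwardIter P hg n (k + 1)).aemeasurable).symm

/-- Constants factor out of the chain expectation. Finiteness of `c` makes this true even for a
non-measurable `φ`. -/
theorem kexpNH_const_mul {Y : Type*} [MeasurableSpace Y] (κ : ℕ → Kernel Y Y) {c : ℝ≥0∞}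
    (hc : c ≠ ⊤) (n k : ℕ) (y : Y) (φ : (Fin (n + 1) → Y) → ℝ≥0∞) :
    kexpNH κ k n y (fun v => c * φ v) = c * kexpNH κ k n y φ := by
  induction n generalizing k y with
  | zero => rfl
  | succ n ih =>
    simp only [kexpNH, ih]
    exact lintegral_const_mul' _ _ hc

/-- First-step decomposition of the expectation of `F` at the final time, weighted by the product of
the state-dependent factors `w` over all earlier times. -/
theorem kexpNH_weight_succ {Y : Type*} [MeasurableSpace Y] (κ : ℕ → Kernel Y Y)
    (w : ℕ → Y → ℝ≥0∞) (hw : ∀ k y, w k y ≠ ⊤) (F : Y → ℝ≥0∞) (n k : ℕ) (y : Y) :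
    kexpNH κ k (n + 1) y
        (fun v => F (v (Fin.last (n + 1))) * ∏ i : Fin (n + 1), w (k + i.1 + 1) (v i.castSucc)) =
      w (k + 1) y * ∫⁻ y', kexpNH κ (k + 1) n y'
        (fun v => F (v (Fin.last n)) * ∏ i : Fin n, w (k + 1 + i.1 + 1) (v i.castSucc))
          ∂(κ (k + 1) y) := by
  rw [← lintegral_const_mul' _ _ (hw _ _)]
  simp only [kexpNH, ← kexpNH_const_mul κ (hw (k + 1) y)]
  refine lintegral_congr fun y' => ?_
  congr 1
  funext v
  rw [Fin.prod_univ_succ]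
  have e : ∀ i : Fin n, k + (i.1 + 1) + 1 = k + 1 + i.1 + 1 := fun i => by omega
  simp only [← Fin.succ_last, Fin.cons_succ, Fin.castSucc_zero, Fin.cons_zero, Fin.val_zero,
    Fin.val_succ, ← Fin.succ_castSucc, e, add_zero]
  ring

/-- Integration of a coupling bound against a coupling measure `ρ`; no measurability of `W` is
needed because the other summands are measurable. -/
theorem lintegral_coupling_le {X : Type*} [MeasurableSpace X] (ρ : Measure (X × X))
    {a b : X → ℝ≥0∞} (ha : Measurable a) (hb : Measurable b) (W : X × X → ℝ≥0∞)
    (h : ∀ p : X × X, a p.1 + b p.2 ≤ b p.1 + a p.2 + W p) :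
    ∫⁻ p, a p.1 ∂ρ + ∫⁻ p, b p.2 ∂ρ ≤
      ∫⁻ p, b p.1 ∂ρ + ∫⁻ p, a p.2 ∂ρ + ∫⁻ p, W p ∂ρ := by
  have ha1 : Measurable fun p : X × X => a p.1 := ha.comp measurable_fst
  have hb1 : Measurable fun p : X × X => b p.1 := hb.comp measurable_fst
  have ha2 : Measurable fun p : X × X => a p.2 := ha.comp measurable_snd
  rw [← lintegral_add_left ha1, ← lintegral_add_left hb1,
    ← lintegral_add_left (f := fun p : X × X => b p.1 + a p.2) (hb1.add ha2)]
  exact lintegral_mono h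

/-- The residual part `ρ` of a split coupling contracts a coupling bound by the factor `c`; the
common part `e • ν` cancels. The case `e = 0` covers an ordinary coupling. -/
theorem split_coupling_le {X : Type*} [MeasurableSpace X] {μ μ' ν : Measure X}
    {ρ : Measure (X × X)} {c e : ℝ≥0∞}
    (h1 : ∀ A, MeasurableSet A → c * ρ (A ×ˢ univ) + e * ν A = μ A)
    (h2 : ∀ A, MeasurableSet A → c * ρ (univ ×ˢ A) + e * ν A = μ' A)
    {a b : X → ℝ≥0∞} (ha : Measurable a) (hb : Measurable b) (W : X × X → ℝ≥0∞)
    (h : ∀ p : X × X, a p.1 + b p.2 ≤ b p.1 + a p.2 + W p) :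
    ∫⁻ x, a x ∂μ + ∫⁻ x, b x ∂μ' ≤
      ∫⁻ x, b x ∂μ + ∫⁻ x, a x ∂μ' + c * ∫⁻ p, W p ∂ρ := by
  have e1 : μ = c • ρ.map Prod.fst + e • ν := by
    ext A hA
    simp [Measure.map_apply measurable_fst hA, ← h1 A hA, Set.prod_univ]
  have e2 : μ' = c • ρ.map Prod.snd + e • ν := by
    ext A hA
    simp [Measure.map_apply measurable_snd hA, ← h2 A hA, Set.univ_prod]
  have l1 : ∀ g : X → ℝ≥0∞, Measurable g →
      ∫⁻ x, g x ∂μ = c * ∫⁻ p, g p.1 ∂ρ + e * ∫⁻ x, g x ∂ν := fun g hg => by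
    rw [e1, lintegral_add_measure, lintegral_smul_measure, lintegral_smul_measure,
      lintegral_map hg measurable_fst]
    rfl
  have l2 : ∀ g : X → ℝ≥0∞, Measurable g →
      ∫⁻ x, g x ∂μ' = c * ∫⁻ p, g p.2 ∂ρ + e * ∫⁻ x, g x ∂ν := fun g hg => by
    rw [e2, lintegral_add_measure, lintegral_smul_measure, lintegral_smul_measure,
      lintegral_map hg measurable_snd]
    rfl
  rw [l1 a ha, l1 b hb, l2 a ha, l2 b hb]
  have key := mul_le_mul_right (lintegral_coupling_le ρ ha hb W h) c
  calc _ = c * (∫⁻ p, a p.1 ∂ρ + ∫⁻ p, b p.2 ∂ρ)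
          + (e * ∫⁻ x, a x ∂ν + e * ∫⁻ x, b x ∂ν) := by ring
    _ ≤ c * (∫⁻ p, b p.1 ∂ρ + ∫⁻ p, a p.2 ∂ρ + ∫⁻ p, W p ∂ρ)
          + (e * ∫⁻ x, a x ∂ν + e * ∫⁻ x, b x ∂ν) := by gcongr
    _ = _ := by ring

/-- Passage from the subtraction-free inequalities for `φ⁺` and `φ⁻` to Bochner integrals. -/
theorem ofReal_abs_integral_sub_le {X : Type*} [MeasurableSpace X] {μ μ' : Measure X} {φ : X → ℝ}
    (hμ : Integrable φ μ) (hμ' : Integrable φ μ') (B : ℝ≥0∞)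
    (h1 : ∫⁻ x, ENNReal.ofReal (φ x) ∂μ + ∫⁻ x, ENNReal.ofReal (-φ x) ∂μ' ≤
      ∫⁻ x, ENNReal.ofReal (-φ x) ∂μ + ∫⁻ x, ENNReal.ofReal (φ x) ∂μ' + B)
    (h2 : ∫⁻ x, ENNReal.ofReal (-φ x) ∂μ + ∫⁻ x, ENNReal.ofReal (φ x) ∂μ' ≤
      ∫⁻ x, ENNReal.ofReal (φ x) ∂μ + ∫⁻ x, ENNReal.ofReal (-φ x) ∂μ' + B) :
    ENNReal.ofReal |∫ x, φ x ∂μ - ∫ x, φ x ∂μ'| ≤ B := by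
  rcases eq_or_ne B ⊤ with rfl | hB
  · exact le_top
  have n1 : ∫⁻ x, ENNReal.ofReal (φ x) ∂μ ≠ ⊤ := hμ.lintegral_lt_top.ne
  have n2 : ∫⁻ x, ENNReal.ofReal (-φ x) ∂μ ≠ ⊤ := hμ.neg.lintegral_lt_top.ne
  have n3 : ∫⁻ x, ENNReal.ofReal (φ x) ∂μ' ≠ ⊤ := hμ'.lintegral_lt_top.ne
  have n4 : ∫⁻ x, ENNReal.ofReal (-φ x) ∂μ' ≠ ⊤ := hμ'.neg.lintegral_lt_top.ne
  rw [integral_eq_lintegral_pos_part_sub_lintegral_neg_part hμ,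
    integral_eq_lintegral_pos_part_sub_lintegral_neg_part hμ']
  lift ∫⁻ x, ENNReal.ofReal (φ x) ∂μ to NNReal using n1 with a1
  lift ∫⁻ x, ENNReal.ofReal (-φ x) ∂μ to NNReal using n2 with b1
  lift ∫⁻ x, ENNReal.ofReal (φ x) ∂μ' to NNReal using n3 with a2
  lift ∫⁻ x, ENNReal.ofReal (-φ x) ∂μ' to NNReal using n4 with b2
  lift B to NNReal using hB
  have h1' : (a1 : ℝ) + b2 ≤ b1 + a2 + B := by exact_mod_cast h1
  have h2' : (b1 : ℝ) + a2 ≤ a1 + b2 + B := by exact_mod_cast h2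
  rw [← ENNReal.ofReal_coe_nnreal (p := B)]
  refine ENNReal.ofReal_le_ofReal ?_
  simp only [ENNReal.coe_toReal]
  rw [abs_le]
  constructor <;> linarith

/-- Lemma 7: the time-inhomogeneous coupling inequality
`‖ξP₁⋯Pₙ - ξ'P₁⋯Pₙ‖_f ≤ E*_{ξ⊗ξ'}[(f(Xₙ) + f(X'ₙ)) ∏_{i=1}^n (1 - ε_i 1_{C̄ᵢ}(X̄_{i-1}))]`. -/
theorem time_inhomogeneous_coupling_inequality
    {X : Type*} [MeasurableSpace X] (P : ℕ → Kernel X X) [∀ k, IsMarkovKernel (P k)]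
    -- (NS1)
    (Cbar : ℕ → Set (X × X)) (hCbar : ∀ k, MeasurableSet (Cbar k))
    (ε : ℕ → ℝ) (hε : ∀ k, 1 ≤ k → 0 ≤ ε k ∧ ε k < 1)
    (ν : ℕ → X × X → Measure X) (hν : ∀ k, 1 ≤ k → ∀ p ∈ Cbar k, IsProbabilityMeasure (ν k p))
    (hminor : ∀ k, 1 ≤ k → ∀ p ∈ Cbar k, ∀ A : Set X, MeasurableSet A →
      ENNReal.ofReal (ε k) * ν k p A ≤ min (P k p.1 A) (P k p.2 A))
    -- the residual kernels R̄ₖ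
    (Rbar : ℕ → Kernel (X × X) (X × X)) [∀ k, IsMarkovKernel (Rbar k)]
    (hRbar1 : ∀ k, 1 ≤ k → ∀ p ∈ Cbar k, ∀ A : Set X, MeasurableSet A →
      ENNReal.ofReal (1 - ε k) * Rbar k p (A ×ˢ Set.univ) + ENNReal.ofReal (ε k) * ν k p A =
        P k p.1 A)
    (hRbar2 : ∀ k, 1 ≤ k → ∀ p ∈ Cbar k, ∀ A : Set X, MeasurableSet A →
      ENNReal.ofReal (1 - ε k) * Rbar k p (Set.univ ×ˢ A) + ENNReal.ofReal (ε k) * ν k p A =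
        P k p.2 A)
    -- the kernels P̄ₖ
    (Pbar : ℕ → Kernel (X × X) (X × X)) [∀ k, IsMarkovKernel (Pbar k)]
    (hPbar1 : ∀ k, 1 ≤ k → ∀ p ∈ Cbar k, ∀ A A' : Set X, MeasurableSet A → MeasurableSet A' →
      Pbar k p (A ×ˢ A') = ENNReal.ofReal (1 - ε k) * Rbar k p (A ×ˢ A') +
        ENNReal.ofReal (ε k) * ν k p (A ∩ A'))
    (hPbar2 : ∀ k, 1 ≤ k → ∀ p ∉ Cbar k, ∀ A : Set X, MeasurableSet A →
      Pbar k p (A ×ˢ Set.univ) = P k p.1 A ∧ Pbar k p (Set.univ ×ˢ A) = P k p.2 A)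
    -- the kernels P*ₖ
    (Pstar : ℕ → Kernel (X × X) (X × X))
    (hPstar1 : ∀ k, 1 ≤ k → ∀ p ∈ Cbar k, Pstar k p = Rbar k p)
    (hPstar2 : ∀ k, 1 ≤ k → ∀ p ∉ Cbar k, Pstar k p = Pbar k p)
    (f : X → ℝ) (hf1 : ∀ x, 1 ≤ f x) (hfm : Measurable f)
    (ξ ξ' : Measure X) [IsProbabilityMeasure ξ] [IsProbabilityMeasure ξ']
    (n : ℕ) (hn : 1 ≤ n) :
    fDist f (iterMeasNH P ξ n) (iterMeasNH P ξ' n) ≤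
      chainExpNH Pstar (ξ.prod ξ') n
        (fun v => (ENNReal.ofReal (f (v (Fin.last n)).1) + ENNReal.ofReal (f (v (Fin.last n)).2)) *
          ∏ i : Fin n, (1 - ENNReal.ofReal (ε (i.1 + 1)) *
            Set.indicator (Cbar (i.1 + 1)) (fun _ => (1 : ℝ≥0∞)) (v i.castSucc))) := by
  set w : ℕ → X × X → ℝ≥0∞ := fun k p => 1 - ENNReal.ofReal (ε k) *
    Set.indicator (Cbar k) (fun _ => (1 : ℝ≥0∞)) p with hw
  have hwtop : ∀ k p, w k p ≠ ⊤ := fun k p => ENNReal.sub_ne_top ENNReal.one_ne_top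
  set F : X × X → ℝ≥0∞ := fun p => ENNReal.ofReal (f p.1) + ENNReal.ofReal (f p.2) with hF
  have coupling_step : ∀ k, 1 ≤ k → ∀ (a b : X → ℝ≥0∞) (W : X × X → ℝ≥0∞), Measurable a →
      Measurable b → (∀ p : X × X, a p.1 + b p.2 ≤ b p.1 + a p.2 + W p) → ∀ p : X × X,
      ∫⁻ x, a x ∂(P k p.1) + ∫⁻ x, b x ∂(P k p.2) ≤
        ∫⁻ x, b x ∂(P k p.1) + ∫⁻ x, a x ∂(P k p.2) + w k p * ∫⁻ q, W q ∂(Pstar k p) := by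
    intro k hk a b W ha hb h p
    by_cases hp : p ∈ Cbar k
    · have hwp : w k p = ENNReal.ofReal (1 - ε k) := by
        simp [hw, hp, ENNReal.ofReal_sub 1 (hε k hk).1]
      rw [hwp, hPstar1 k hk p hp]
      exact split_coupling_le (hRbar1 k hk p hp) (hRbar2 k hk p hp) ha hb W h
    · have hwp : w k p = 1 := by simp [hw, hp]
      rw [hwp, hPstar2 k hk p hp]
      refine split_coupling_le (ν := 0) (c := 1) (e := 0) (fun A hA => ?_)
        (fun A hA => ?_) ha hb W h
      · simpa using (hPbar2 k hk p hp A hA).1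
      · simpa using (hPbar2 k hk p hp A hA).2
  -- The bound for the chain started at time `k`, obtained by iterating `coupling_step` backwards.
  have pointwise : ∀ a b : X → ℝ≥0∞, Measurable a → Measurable b →
      (∀ x, a x ≤ ENNReal.ofReal (f x)) → (∀ x, b x ≤ ENNReal.ofReal (f x)) →
      ∀ (m k : ℕ) (p : X × X), backwardIter P a k m p.1 + backwardIter P b k m p.2 ≤
        backwardIter P b k m p.1 + backwardIter P a k m p.2 + kexpNH Pstar k m p
          (fun v => F (v (Fin.last m)) * ∏ i : Fin m, w (k + i.1 + 1) (v i.castSucc)) := by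
    intro a b ha hb haf hbf m
    induction m with
    | zero =>
      intro k p
      simp only [backwardIter, kexpNH, Finset.univ_eq_empty, Finset.prod_empty, mul_one]
      exact (add_le_add (haf p.1) (hbf p.2)).trans le_add_self
    | succ m ih =>
      intro k p
      rw [kexpNH_weight_succ Pstar w hwtop F m k p]
      exact coupling_step (k + 1) (by omega) _ _ _ (measurable_backwardIter P ha m (k + 1))
        (measurable_backwardIter P hb m (k + 1)) (ih (k + 1)) p
  have integrated : ∀ a b : X → ℝ≥0∞, Measurable a → Measurable b →
      (∀ x, a x ≤ ENNReal.ofReal (f x)) → (∀ x, b x ≤ ENNReal.ofReal (f x)) →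
      ∫⁻ x, a x ∂(iterMeasNH P ξ n) + ∫⁻ x, b x ∂(iterMeasNH P ξ' n) ≤
        ∫⁻ x, b x ∂(iterMeasNH P ξ n) + ∫⁻ x, a x ∂(iterMeasNH P ξ' n) +
        chainExpNH Pstar (ξ.prod ξ') n
          (fun v => F (v (Fin.last n)) * ∏ i : Fin n, w (i.1 + 1) (v i.castSucc)) := by
    intro a b ha hb haf hbf
    have h := split_coupling_le (μ := ξ) (μ' := ξ') (ν := 0) (c := 1) (e := 0)
      (ρ := ξ.prod ξ') (fun A _ => by simp) (fun A _ => by simp)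
      (measurable_backwardIter P ha n 0) (measurable_backwardIter P hb n 0) _
      (pointwise a b ha hb haf hbf n 0)
    have l : ∀ (ζ : Measure X) (g : X → ℝ≥0∞), Measurable g →
        ∫⁻ x, backwardIter P g 0 n x ∂ζ = ∫⁻ x, g x ∂(iterMeasNH P ζ n) := fun ζ g hg => by
      simpa [iterMeasNH] using lintegral_backwardIter P ζ hg n 0
    rw [l ξ a ha, l ξ b hb, l ξ' a ha, l ξ' b hb, one_mul] at h
    simpa only [zero_add, chainExpNH] using h
  refine iSup_le fun φ => iSup_le fun hφ => iSup_le fun hφf => iSup_le fun hi => iSup_le fun hi' => ?_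
  have hpos : ∀ x, ENNReal.ofReal (φ x) ≤ ENNReal.ofReal (f x) := fun x =>
    ENNReal.ofReal_le_ofReal ((le_abs_self _).trans (hφf x))
  have hneg : ∀ x, ENNReal.ofReal (-φ x) ≤ ENNReal.ofReal (f x) := fun x =>
    ENNReal.ofReal_le_ofReal ((neg_le_abs _).trans (hφf x))
  exact ofReal_abs_integral_sub_le hi hi' _
    (integrated _ _ hφ.ennreal_ofReal hφ.neg.ennreal_ofReal hpos hneg)
    (integrated _ _ hφ.neg.ennreal_ofReal hφ.ennreal_ofReal hneg hpos)
end

section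
/- Assume (SA0)–(SA2). For every β with 1/2 < β < 1, there exist x̄ < ∞, γ̄ > 0 and s > 0 such that: (i) K_γ V_s(x)/V_s(x) ≤ r(γ,s) for all x ∈ ℝ and all γ > s; and (ii) K_γ V_s(x)/V_s(x) ≤ β for all |x| ≥ x̄ and all γ ≥ γ̄. -/
/-!
Writing `t = f y - f x` and `a = min 1 (e^{-γ t})`, the ratio `K_γ V_s(x) / V_s(x)` is the average of
`a e^{s t} + (1 - a)` under the proposal density `q (y - x)`.

* Pointwise, this integrand never exceeds `r(γ,s)` (`integrand_le_rate`): for `t ≤ 0` it is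
  `e^{s t} ≤ 1 ≤ r`, and for `t > 0` it is `1 + w^{p-1} - w^p` with `w = e^{-s t}`, `p = γ / s`,
  whose maximum, attained at `w = (p-1)/p`, is `r`; the maximality is Bernoulli's inequality.
  Averaging gives (i).
* If `|x|` is large, the proposals that go towards the origin by a distance between `η` and `M`
  decrease `f` by at least `α η`, so there the integrand is at most `e^{-s α η}`. By symmetry
  of `q` these proposals have mass `∫_η^M q`, as close to `1/2` as desired
  (`exists_window`). Hence the ratio is at most `e^{-s α η} + r(γ,s) (1 - ∫_η^M q)`
  (`drift_of_window`). Choosing `η, M`, then `s` large, then `γ` large (as `r(γ,s) ≤ 1 + s/γ`)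
  brings this below any `β > 1/2`.
-/

open MeasureTheory Set
open scoped ENNReal

/-- The random walk Metropolis–Hastings kernel `K_γ`. -/
noncomputable def rwmKernel (f q : ℝ → ℝ) (γ x : ℝ) : Measure ℝ :=
  volume.withDensity
      (fun y => ENNReal.ofReal (min 1 (Real.exp (-γ * (f y - f x))) * q (y - x))) +
    (∫⁻ y, ENNReal.ofReal ((1 - min 1 (Real.exp (-γ * (f y - f x)))) * q (y - x))) •
      Measure.dirac x

/-- `r(γ,s) = 1 - ((γ-s)/γ)^{γ/s} + ((γ-s)/γ)^{(γ-s)/s}` (see (36)). -/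
noncomputable def rateFun (γ s : ℝ) : ℝ :=
  1 - ((γ - s) / γ) ^ (γ / s) + ((γ - s) / γ) ^ ((γ - s) / s)

lemma rateFun_le {γ s : ℝ} (hs : 0 < s) (hγ : s < γ) : rateFun γ s ≤ 1 + s / γ := by
  have hγ0 : 0 < γ := hs.trans hγ
  have hw : 0 < (γ - s) / γ := div_pos (by linarith) hγ0
  have hw1 : (γ - s) / γ ≤ 1 := by rw [div_le_one hγ0]; linarith
  have e1 : ((γ - s) / γ) ^ (γ / s) = ((γ - s) / γ) ^ ((γ - s) / s) * ((γ - s) / γ) := by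
    rw [← Real.rpow_add_one hw.ne']
    congr 1
    field_simp
    ring
  have h1 : ((γ - s) / γ) ^ ((γ - s) / s) ≤ 1 :=
    Real.rpow_le_one hw.le hw1 (div_nonneg (by linarith) hs.le)
  have h2 : s / γ = 1 - (γ - s) / γ := by field_simp; ring
  unfold rateFun
  rw [e1, h2]
  nlinarith

lemma one_le_rateFun {γ s : ℝ} (hs : 0 < s) (hγ : s < γ) : 1 ≤ rateFun γ s := by
  have hγ0 : 0 < γ := hs.trans hγ
  have hw : 0 < (γ - s) / γ := div_pos (by linarith) hγ0
  have hw1 : (γ - s) / γ ≤ 1 := by rw [div_le_one hγ0]; linarith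
  have h : ((γ - s) / γ) ^ (γ / s) ≤ ((γ - s) / γ) ^ ((γ - s) / s) :=
    Real.rpow_le_rpow_of_exponent_ge hw hw1 (by gcongr; linarith)
  unfold rateFun
  linarith

/-- The maximum of `1 - e^{-γ t} + e^{-(γ-s) t}` over `t` is `r(γ,s)`. -/
lemma uphill_le_rate {γ s : ℝ} (hs : 0 < s) (hγ : s < γ) (t : ℝ) :
    1 - Real.exp (-γ * t) + Real.exp (-γ * t) * Real.exp (s * t) ≤ rateFun γ s := by
  have hγ0 : 0 < γ := hs.trans hγ
  have hw : 0 < (γ - s) / γ := div_pos (by linarith) hγ0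
  have hp : 1 ≤ γ / s := by rw [one_le_div hs]; exact hγ.le
  have e1 : ((γ - s) / γ) ^ (γ / s) = ((γ - s) / γ) ^ ((γ - s) / s) * ((γ - s) / γ) := by
    rw [← Real.rpow_add_one hw.ne']
    congr 1
    field_simp
    ring
  -- Bernoulli's inequality `1 + p (u - 1) ≤ u ^ p` at `p = γ / s`, `u = (γ - s) / γ * e^{s t}`.
  have hB := one_add_mul_self_le_rpow_one_add
    (s := (γ - s) / γ * Real.exp (s * t) - 1)
    (by have := mul_pos hw (Real.exp_pos (s * t)); linarith) hp
  rw [add_sub_cancel, Real.mul_rpow hw.le (Real.exp_pos _).le, ← Real.exp_mul] at hB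
  have e2 : s * t * (γ / s) = γ * t := by field_simp
  rw [e2] at hB
  have e3 : Real.exp (γ * t) * Real.exp (-γ * t) = 1 := by
    rw [← Real.exp_add]; simp
  unfold rateFun
  rw [e1] at hB ⊢
  set P := ((γ - s) / γ) ^ ((γ - s) / s)
  set E := Real.exp (-γ * t)
  set F := Real.exp (s * t)
  have hE : 0 < E := Real.exp_pos _
  have h2 := mul_le_mul_of_nonneg_right hB hE.le
  have e4 : P * ((γ - s) / γ) * Real.exp (γ * t) * E = P * ((γ - s) / γ) := by
    rw [mul_assoc, e3, mul_one]
  rw [e4] at h2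
  have hd : 0 < γ - s := by linarith
  have h3 := mul_le_mul_of_nonneg_right h2 (div_pos hs hd).le
  have e5 : (1 + γ / s * ((γ - s) / γ * F - 1)) * E * (s / (γ - s)) = E * F - E := by
    field_simp
    ring
  have e6 : P * ((γ - s) / γ) * (s / (γ - s)) = P - P * ((γ - s) / γ) := by
    field_simp
    ring
  rw [e5, e6] at h3
  linarith

lemma integrand_le_rate {γ s : ℝ} (hs : 0 < s) (hγ : s < γ) (t : ℝ) :
    min 1 (Real.exp (-γ * t)) * Real.exp (s * t) + (1 - min 1 (Real.exp (-γ * t)))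
      ≤ rateFun γ s := by
  have hγ0 : 0 < γ := hs.trans hγ
  rcases le_total t 0 with ht | ht
  · have h1 : 1 ≤ Real.exp (-γ * t) := Real.one_le_exp (by nlinarith)
    have h2 : Real.exp (s * t) ≤ 1 := Real.exp_le_one_iff.2 (by nlinarith)
    rw [min_eq_left h1]
    linarith [one_le_rateFun hs hγ]
  · have h1 : Real.exp (-γ * t) ≤ 1 := Real.exp_le_one_iff.2 (by nlinarith)
    rw [min_eq_right h1]
    linarith [uphill_le_rate hs hγ t]

lemma integrand_le_downhill {γ s δ t : ℝ} (hs : 0 < s) (hγ : s < γ) (hδ : 0 ≤ δ) (ht : t ≤ -δ) :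
    min 1 (Real.exp (-γ * t)) * Real.exp (s * t) + (1 - min 1 (Real.exp (-γ * t)))
      ≤ Real.exp (-(s * δ)) := by
  have h1 : 1 ≤ Real.exp (-γ * t) := Real.one_le_exp (by nlinarith)
  have h2 : Real.exp (s * t) ≤ Real.exp (-(s * δ)) := Real.exp_le_exp.2 (by nlinarith)
  rw [min_eq_left h1]
  linarith

/-- A pointwise bound `B` of the integrand of `K_γ V_s(x) / V_s(x)` may be averaged under the
proposal density. -/
lemma kernel_le_of_pointwise {f q : ℝ → ℝ} (hf : Continuous f) (hqc : Continuous q)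
    (hq : ∀ y, 0 ≤ q y) {γ s x b : ℝ} {B : ℝ → ℝ}
    (hB : ∀ y, min 1 (Real.exp (-γ * (f y - f x))) * Real.exp (s * (f y - f x))
      + (1 - min 1 (Real.exp (-γ * (f y - f x)))) ≤ B y)
    (hint : Integrable (fun y => B y * q (y - x))) (hb : ∫ y, B y * q (y - x) ≤ b) :
    ∫⁻ y, ENNReal.ofReal (Real.exp (s * f y)) ∂(rwmKernel f q γ x) ≤
      ENNReal.ofReal (b * Real.exp (s * f x)) := by
  have ha0 : ∀ y, 0 ≤ min 1 (Real.exp (-γ * (f y - f x))) := fun y =>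
    le_min zero_le_one (Real.exp_pos _).le
  have ha1 : ∀ y, 0 ≤ 1 - min 1 (Real.exp (-γ * (f y - f x))) := fun y =>
    sub_nonneg.2 (min_le_left _ _)
  have hB0 : ∀ y, 0 ≤ B y := fun y =>
    (add_nonneg (mul_nonneg (ha0 y) (Real.exp_pos _).le) (ha1 y)).trans (hB y)
  have hm : Measurable fun y =>
      ENNReal.ofReal (min 1 (Real.exp (-γ * (f y - f x))) * q (y - x)) := by
    apply Measurable.ennreal_ofReal
    apply Continuous.measurable
    fun_prop
  have hm2 : Measurable fun y =>
      ENNReal.ofReal ((1 - min 1 (Real.exp (-γ * (f y - f x)))) * q (y - x)) := by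
    apply Measurable.ennreal_ofReal
    apply Continuous.measurable
    fun_prop
  have hV : Measurable fun y => ENNReal.ofReal (Real.exp (s * f y)) := by
    apply Measurable.ennreal_ofReal
    apply Continuous.measurable
    fun_prop
  unfold rwmKernel
  rw [lintegral_add_measure, lintegral_smul_measure, lintegral_dirac' _ hV,
    lintegral_withDensity_eq_lintegral_mul _ hm hV, smul_eq_mul, ← lintegral_mul_const _ hm2,
    ← lintegral_add_left (hm.mul hV)]
  calc _ ≤ ∫⁻ y, ENNReal.ofReal (B y * q (y - x)) * ENNReal.ofReal (Real.exp (s * f x)) := by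
        apply lintegral_mono
        intro y
        simp only [Pi.mul_apply]
        rw [← ENNReal.ofReal_mul (mul_nonneg (ha0 y) (hq _)),
          ← ENNReal.ofReal_mul (mul_nonneg (ha1 y) (hq _)),
          ← ENNReal.ofReal_mul (mul_nonneg (hB0 y) (hq _)),
          ← ENNReal.ofReal_add
            (mul_nonneg (mul_nonneg (ha0 y) (hq _)) (Real.exp_pos _).le)
            (mul_nonneg (mul_nonneg (ha1 y) (hq _)) (Real.exp_pos _).le)]
        apply ENNReal.ofReal_le_ofReal
        have e : Real.exp (s * f y) = Real.exp (s * (f y - f x)) * Real.exp (s * f x) := by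
          rw [← Real.exp_add]; ring_nf
        rw [e]
        have := mul_le_mul_of_nonneg_right (hB y)
          (mul_nonneg (hq (y - x)) (Real.exp_pos (s * f x)).le)
        linarith
    _ = ENNReal.ofReal (∫ y, B y * q (y - x)) * ENNReal.ofReal (Real.exp (s * f x)) := by
        rw [lintegral_mul_const' _ _ ENNReal.ofReal_ne_top,
          ofReal_integral_eq_lintegral_ofReal hint
            (Filter.Eventually.of_forall fun y => mul_nonneg (hB0 y) (hq _))]
    _ ≤ _ := by
        rw [← ENNReal.ofReal_mul (integral_nonneg fun y => mul_nonneg (hB0 y) (hq _))]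
        exact ENNReal.ofReal_le_ofReal (mul_le_mul_of_nonneg_right hb (Real.exp_pos _).le)

/-- If every proposal in the window `(u, v]` decreases `f` by at least `δ`, and the window has
proposal mass `c`, then `K_γ V_s(x) / V_s(x) ≤ e^{-s δ} + r(γ,s) (1 - c)`. -/
lemma drift_of_window {f q : ℝ → ℝ} (hf : Continuous f) (hqc : Continuous q)
    (hq : ∀ y, 0 ≤ q y) (hqi : Integrable q) (hqint : ∫ y, q y = 1)
    {γ s x δ u v b : ℝ} (hs : 0 < s) (hγ : s < γ) (hδ : 0 ≤ δ)
    (hS : ∀ y ∈ Ioc u v, f y - f x ≤ -δ) (huv : u ≤ v)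
    (hb : Real.exp (-(s * δ)) + rateFun γ s * (1 - ∫ y in u..v, q (y - x)) ≤ b) :
    ∫⁻ y, ENNReal.ofReal (Real.exp (s * f y)) ∂(rwmKernel f q γ x) ≤
      ENNReal.ofReal (b * Real.exp (s * f x)) := by
  have hqx : Integrable fun y => q (y - x) := hqi.comp_sub_right x
  have hr := one_le_rateFun hs hγ
  have hi2 : Integrable ((Ioc u v).indicator fun y => q (y - x)) :=
    hqx.indicator measurableSet_Ioc
  have e : (fun y => (Real.exp (-(s * δ)) + rateFun γ s * (1 - (Ioc u v).indicator 1 y))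
      * q (y - x)) = fun y => (Real.exp (-(s * δ)) + rateFun γ s) * q (y - x)
        - rateFun γ s * (Ioc u v).indicator (fun y => q (y - x)) y := by
    funext y
    by_cases hy : y ∈ Ioc u v
    · simp only [indicator_of_mem hy, Pi.one_apply]; ring
    · simp only [indicator_of_notMem hy]; ring
  refine kernel_le_of_pointwise hf hqc hq
    (B := fun y => Real.exp (-(s * δ)) + rateFun γ s * (1 - (Ioc u v).indicator 1 y)) ?_ ?_ ?_
  · intro y
    by_cases hy : y ∈ Ioc u v
    · simp only [indicator_of_mem hy, Pi.one_apply, sub_self, mul_zero, add_zero]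
      exact integrand_le_downhill hs hγ hδ (hS y hy)
    · simp only [indicator_of_notMem hy, sub_zero, mul_one]
      have := integrand_le_rate hs hγ (f y - f x)
      have := Real.exp_pos (-(s * δ))
      linarith
  · rw [e]
    exact (hqx.const_mul _).sub (hi2.const_mul _)
  · rw [e, integral_sub (hqx.const_mul _) (hi2.const_mul _), integral_const_mul,
      integral_const_mul, integral_indicator measurableSet_Ioc,
      integral_sub_right_eq_self (fun y => q y) x, hqint,
      ← intervalIntegral.integral_of_le huv]
    linarith

/-- A symmetric probability density has mass `1/2` on `(0, ∞)`, hence mass close to `1/2` on some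
`(η, M]` with `η > 0`. -/
lemma exists_window {q : ℝ → ℝ} (hqi : Integrable q) (hqsym : ∀ y, q (-y) = q y)
    (hqint : ∫ y, q y = 1) {c : ℝ} (hc : c < 1 / 2) :
    ∃ η M : ℝ, 0 < η ∧ η ≤ M ∧ c < ∫ y in η..M, q y := by
  have hhalf : ∫ y in Ioi (0 : ℝ), q y = 1 / 2 := by
    have h1 := intervalIntegral.integral_Iic_add_Ioi (b := (0 : ℝ)) hqi.integrableOn
      hqi.integrableOn
    have h2 := integral_comp_neg_Iic (0 : ℝ) q
    simp only [hqsym, neg_zero] at h2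
    linarith
  have hU : (⋃ n : ℕ, Ioc (1 / ((n : ℝ) + 1)) ((n : ℝ) + 1)) = Ioi 0 := by
    ext y
    simp only [mem_iUnion, mem_Ioc, mem_Ioi]
    constructor
    · rintro ⟨n, h, -⟩
      exact lt_trans (by positivity) h
    · intro hy
      obtain ⟨n, hn⟩ := exists_nat_one_div_lt hy
      obtain ⟨m, hm⟩ := exists_nat_ge y
      refine ⟨max n m, lt_of_le_of_lt ?_ hn, ?_⟩
      · apply one_div_le_one_div_of_le (by positivity)
        have : (n : ℝ) ≤ (max n m : ℕ) := by exact_mod_cast le_max_left n m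
        linarith
      · have : (m : ℝ) ≤ (max n m : ℕ) := by exact_mod_cast le_max_right n m
        linarith
  have ht := tendsto_setIntegral_of_monotone (μ := volume) (f := q)
    (s := fun n : ℕ => Ioc (1 / ((n : ℝ) + 1)) ((n : ℝ) + 1))
    (fun n => measurableSet_Ioc)
    (by
      intro n m hnm
      have h : (n : ℝ) ≤ m := by exact_mod_cast hnm
      apply Ioc_subset_Ioc
      · apply one_div_le_one_div_of_le (by positivity)
        linarith
      · linarith)
    hqi.integrableOn
  rw [hU, hhalf] at ht
  obtain ⟨n, hn⟩ := (ht.eventually (lt_mem_nhds hc)).exists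
  have hle : 1 / ((n : ℝ) + 1) ≤ (n : ℝ) + 1 := by
    have h0 : (0 : ℝ) ≤ n := n.cast_nonneg
    rw [div_le_iff₀ (by positivity)]
    nlinarith
  refine ⟨1 / ((n : ℝ) + 1), (n : ℝ) + 1, by positivity, hle, ?_⟩
  rwa [intervalIntegral.integral_of_le hle]

/-- Proposition 10: drift bounds for the RWMH kernels with drift function `V_s = e^{s f}`:
(i) `K_γ V_s / V_s ≤ r(γ,s)` everywhere, and (ii) `K_γ V_s / V_s ≤ β` for `|x| ≥ x̄` and
`γ ≥ γ̄`. -/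
theorem rwm_drift
    (f q : ℝ → ℝ)
    -- (SA0)
    (hf : ContDiff ℝ 2 f) (α x₁ : ℝ) (hα : 0 < α)
    (hgrow1 : ∀ x y : ℝ, x₁ ≤ x → x ≤ y → α * (y - x) ≤ f y - f x)
    (hgrow2 : ∀ x y : ℝ, x ≤ -x₁ → y ≤ x → α * (x - y) ≤ f y - f x)
    -- (SA1)
    (hSA1 : ∀ x : ℝ, (∀ y, f x ≤ f y) → 0 < deriv (deriv f) x)
    -- (SA2)
    (hqc : Continuous q) (hqpos : ∀ y, 0 < q y) (hqsym : ∀ y, q (-y) = q y)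
    (hqint : ∫ y, q y = 1)
    (β : ℝ) (hβ1 : 1 / 2 < β) (hβ2 : β < 1) :
    ∃ xbar γbar s : ℝ, 0 < γbar ∧ 0 < s ∧
      (∀ (x γ : ℝ), s < γ →
        ∫⁻ y, ENNReal.ofReal (Real.exp (s * f y)) ∂(rwmKernel f q γ x) ≤
          ENNReal.ofReal (rateFun γ s * Real.exp (s * f x))) ∧
      (∀ (x γ : ℝ), xbar ≤ |x| → γbar ≤ γ →
        ∫⁻ y, ENNReal.ofReal (Real.exp (s * f y)) ∂(rwmKernel f q γ x) ≤
          ENNReal.ofReal (β * Real.exp (s * f x))) := by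
  have hfc : Continuous f := hf.continuous
  have hq0 : ∀ y, 0 ≤ q y := fun y => (hqpos y).le
  have hqi : Integrable q := by
    by_contra h
    rw [integral_undef h] at hqint
    exact zero_ne_one hqint
  obtain ⟨η, M, hη, hηM, hc⟩ := exists_window hqi hqsym hqint (c := 1 - β) (by linarith)
  set c := ∫ y in η..M, q y with hcdef
  have hc1 : c ≤ 1 := by
    rw [hcdef, intervalIntegral.integral_of_le hηM, ← hqint]
    exact setIntegral_le_integral hqi (Filter.Eventually.of_forall hq0)
  -- The slack `c + β - 1` is split evenly between the choices of `s` and of `γbar`.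
  set ε := (c + β - 1) / 2 with hε
  have hε0 : 0 < ε := by rw [hε]; linarith
  obtain ⟨s, hs, hse⟩ : ∃ s : ℝ, 0 < s ∧ Real.exp (-(s * (α * η))) ≤ ε := by
    have hδ : 0 < α * η := mul_pos hα hη
    have h : Filter.Tendsto (fun s : ℝ => Real.exp (-(s * (α * η)))) Filter.atTop (nhds 0) :=
      Real.tendsto_exp_neg_atTop_nhds_zero.comp (Filter.tendsto_id.atTop_mul_const hδ)
    obtain ⟨s, h1, h2⟩ :=
      ((Filter.eventually_gt_atTop 0).and (h.eventually (gt_mem_nhds hε0))).exists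
    exact ⟨s, h1, h2.le⟩
  refine ⟨|x₁| + M, s + s / ε + 1, s, by positivity, hs, ?_, ?_⟩
  · intro x γ hγ
    have hqx : Integrable fun y => q (y - x) := hqi.comp_sub_right x
    refine kernel_le_of_pointwise hfc hqc hq0 (B := fun _ => rateFun γ s)
      (fun y => integrand_le_rate hs hγ _) (hqx.const_mul _) ?_
    rw [integral_const_mul, integral_sub_right_eq_self (fun y => q y) x, hqint, mul_one]
  · intro x γ hx hγ
    have hsε : 0 < s / ε := div_pos hs hε0
    have hsγ : s < γ := by linarith
    have hr : rateFun γ s ≤ 1 + ε := by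
      have h1 := rateFun_le hs hsγ
      have h2 : s / γ ≤ ε := by
        rw [div_le_comm₀ (hs.trans hsγ) hε0]
        linarith
      linarith
    have hbound : Real.exp (-(s * (α * η))) + rateFun γ s * (1 - c) ≤ β := by
      have h1 := mul_le_mul_of_nonneg_right hr (sub_nonneg.2 hc1)
      have h2 : 0 ≤ ε * c := mul_nonneg hε0.le (by linarith)
      have h3 : 2 * ε = c + β - 1 := by rw [hε]; ring
      nlinarith
    have hx₁ : x₁ ≤ |x₁| := le_abs_self _
    rcases le_total 0 x with h0 | h0
    · rw [abs_of_nonneg h0] at hx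
      have hmass : ∫ y in (x - M)..(x - η), q (y - x) = c := by
        rw [intervalIntegral.integral_comp_sub_right (fun y => q y) x, hcdef]
        have h := intervalIntegral.integral_comp_neg (a := η) (b := M) q
        simp only [hqsym] at h
        rw [h]
        congr 1 <;> ring
      refine drift_of_window hfc hqc hq0 hqi hqint hs hsγ (mul_pos hα hη).le
        (u := x - M) (v := x - η) ?_ (by linarith) (by rw [hmass]; exact hbound)
      rintro y ⟨hy1, hy2⟩
      have h := hgrow1 y x (by linarith) (by linarith)
      nlinarith
    · rw [abs_of_nonpos h0] at hx
      have hmass : ∫ y in (x + η)..(x + M), q (y - x) = c := by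
        rw [intervalIntegral.integral_comp_sub_right (fun y => q y) x, hcdef]
        congr 1 <;> ring
      refine drift_of_window hfc hqc hq0 hqi hqint hs hsγ (mul_pos hα hη).le
        (u := x + η) (v := x + M) ?_ (by linarith) (by rw [hmass]; exact hbound)
      rintro y ⟨hy1, hy2⟩
      have h := hgrow2 y x (by linarith) (by linarith)
      nlinarith
end

section
/- For all real numbers γ > s > 0 and all u > 0, φ_{γ,s}(u) ≤ φ_{γ,s}(((γ−s)/γ)^{1/s}) = 1 − ((γ−s)/γ)^{γ/s} + ((γ−s)/γ)^{(γ−s)/s}; that is, the function φ_{γ,s} attains its maximum over (0,∞) at u = ((γ−s)/γ)^{1/s}, with maximal value r(γ,s). -/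
/-!
Put `a = (γ - s)/γ ∈ (0,1)` and `v = a^{1/s}`, so `v < 1` and `v^s = a`. For `u ≤ 1` one has
`φ(u) = 1 + u^{γ-s} - u^γ`. The weighted AM-GM inequality with weights `a`, `1 - a` applied to `u^γ`
and `v^γ` reads `u^{γ-s} · a ≤ a u^γ + (1 - a) v^γ`, because `γ a = γ - s` and `γ (1 - a) = s`.
Dividing by `a`, this is `u^{γ-s} - u^γ ≤ v^γ (1/a - 1) = v^{γ-s} - v^γ`, i.e. `φ(u) ≤ φ(v)`.
For `u ≥ 1`, `φ(u) = u^{-s} ≤ 1 ≤ φ(v)`.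
-/

open Real

/-- For `γ > s > 0`, the function `φ_{γ,s}(u) = u^{-s} min(u^γ, 1) + 1 - min(u^γ, 1)` attains
its maximum over `(0,∞)` at `u = ((γ-s)/γ)^{1/s}`, with maximal value
`r(γ,s) = 1 - ((γ-s)/γ)^{γ/s} + ((γ-s)/γ)^{(γ-s)/s}` (see (38)). -/
theorem phi_max
    (γ s : ℝ) (hs : 0 < s) (hsγ : s < γ) :
    (∀ u : ℝ, 0 < u →
      u ^ (-s) * min (u ^ γ) 1 + (1 - min (u ^ γ) 1) ≤
        (((γ - s) / γ) ^ (1 / s)) ^ (-s) * min ((((γ - s) / γ) ^ (1 / s)) ^ γ) 1 +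
          (1 - min ((((γ - s) / γ) ^ (1 / s)) ^ γ) 1)) ∧
    (((γ - s) / γ) ^ (1 / s)) ^ (-s) * min ((((γ - s) / γ) ^ (1 / s)) ^ γ) 1 +
        (1 - min ((((γ - s) / γ) ^ (1 / s)) ^ γ) 1) =
      1 - ((γ - s) / γ) ^ (γ / s) + ((γ - s) / γ) ^ ((γ - s) / s) := by
  have hγ : 0 < γ := hs.trans hsγ
  obtain ⟨a, ha⟩ : ∃ a, a = (γ - s) / γ := ⟨_, rfl⟩
  have hγa : γ * a = γ - s := by rw [ha]; field_simp
  have ha0 : 0 < a := by rw [ha]; exact div_pos (by linarith) hγ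
  have ha1 : a < 1 := by rw [ha, div_lt_one hγ]; linarith
  rw [← ha]
  have hvγ : (a ^ (1 / s)) ^ γ = a ^ (γ / s) := by
    rw [← rpow_mul ha0.le]; congr 1; ring
  have hvs : (a ^ (1 / s)) ^ (-s) = a⁻¹ := by
    rw [← rpow_mul ha0.le, ← rpow_neg_one]; congr 1; field_simp
  have hle : a ^ (γ / s) ≤ 1 := rpow_le_one ha0.le ha1.le (by positivity)
  have hpos : 0 < a ^ (γ / s) := rpow_pos_of_pos ha0 _
  have hsub : a ^ ((γ - s) / s) = a⁻¹ * a ^ (γ / s) := by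
    rw [sub_div, div_self hs.ne', rpow_sub_one ha0.ne']; ring
  rw [hvγ, hvs, min_eq_left hle, hsub]
  refine ⟨fun u hu => ?_, by ring⟩
  have hinv : 1 ≤ a⁻¹ := (one_le_inv₀ ha0).2 ha1.le
  rcases le_total u 1 with h | h
  · rw [min_eq_left (rpow_le_one hu.le h hγ.le), ← rpow_add hu]
    have key := geom_mean_le_arith_mean2_weighted ha0.le (sub_nonneg.2 ha1.le)
      (rpow_pos_of_pos hu γ).le hpos.le (by ring)
    have h1 : (u ^ γ) ^ a = u ^ (-s + γ) := by
      rw [← rpow_mul hu.le, hγa]; congr 1; ring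
    have h2 : (a ^ (γ / s)) ^ (1 - a) = a := by
      have : γ / s * (1 - a) = 1 := by
        rw [div_mul_eq_mul_div, div_eq_one_iff_eq hs.ne']; linarith
      rw [← rpow_mul ha0.le, this, rpow_one]
    rw [h1, h2] at key
    have key2 : u ^ (-s + γ) ≤ u ^ γ + (a⁻¹ - 1) * a ^ (γ / s) := by
      refine le_of_mul_le_mul_right (key.trans_eq ?_) ha0
      field_simp
    linarith
  · rw [min_eq_right (one_le_rpow h hγ.le)]
    have h3 : u ^ (-s) ≤ 1 := rpow_le_one_of_one_le_of_nonpos h (by linarith)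
    nlinarith
end
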